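/- arXiv:1411.3267 — 3 statements merged into one kernel-verified Lean document; each statement's English description precedes it below -/
import Mathlib

section
/- Let A : ℝ → Matrix (Fin p) (Fin p) ℂ be bounded and continuous with every entry almost automorphic, with fundamental matrix Φ_A, and suppose y' = A(t)y has an α-exponential dichotomy with constants c, α > 0 whose projection P commutes with Φ_A(t) for every t. Define the Green operator (Γφ)(t) = ∫_ℝ G_A(t,s)·φ(s) ds. Then for every bounded continuous φ : ℝ → ℂ^p, Γφ is bounded and continuous with sup_{t∈ℝ} ‖(Γφ)(t)‖ ≤ (2c/α)·sup_{t∈ℝ} ‖φ(t)‖; moreover, if φ is almost automorphic then Γφ is almost automorphic. -/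
open MeasureTheory Filter Topology

attribute [local instance] Matrix.linftyOpNormedAddCommGroup Matrix.linftyOpNormedRing
  Matrix.linftyOpNormedAlgebra

/-- A continuous function `ψ : ℝ → V` into a Banach space is almost automorphic if for every
sequence of reals there is a subsequence `(τₙ)` and a function `ψ̃` with
`ψ(t+τₙ) → ψ̃(t)` and `ψ̃(t−τₙ) → ψ(t)` pointwise on `ℝ`. -/
def AlmostAutomorphic {V : Type*} [NormedAddCommGroup V] (ψ : ℝ → V) : Prop :=
  Continuous ψ ∧ ∀ σ : ℕ → ℝ, ∃ k : ℕ → ℕ, StrictMono k ∧ ∃ ψt : ℝ → V,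
    (∀ t : ℝ, Tendsto (fun n => ψ (t + σ (k n))) atTop (𝓝 (ψt t))) ∧
    (∀ t : ℝ, Tendsto (fun n => ψt (t - σ (k n))) atTop (𝓝 (ψ t)))

/-- `Φ` is a fundamental matrix of `y' = A(t) y`: it is differentiable with
`Φ'(t) = A(t) Φ(t)` and `Φ(t)` invertible for every `t`. -/
def IsFundamentalMatrix {p : ℕ} (A Φ : ℝ → Matrix (Fin p) (Fin p) ℂ) : Prop :=
  (∀ t : ℝ, HasDerivAt Φ (A t * Φ t) t) ∧ ∀ t : ℝ, IsUnit (Φ t)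

/-- The Green matrix associated with a projection `P` and a fundamental matrix `Φ`. -/
noncomputable def GreenMat {p : ℕ} (Φ : ℝ → Matrix (Fin p) (Fin p) ℂ)
    (P : Matrix (Fin p) (Fin p) ℂ) (t s : ℝ) : Matrix (Fin p) (Fin p) ℂ :=
  if s ≤ t then Φ t * (Φ s)⁻¹ * P else -(Φ t * (Φ s)⁻¹ * (1 - P))

/-! ### Almost automorphy of finite families -/

/-- The sequence `τ` realises almost automorphy for `ψ`. -/
def AAGood {V : Type*} [NormedAddCommGroup V] (ψ : ℝ → V) (τ : ℕ → ℝ) (ψt : ℝ → V) : Prop :=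
  (∀ t : ℝ, Tendsto (fun n => ψ (t + τ n)) atTop (𝓝 (ψt t))) ∧
  (∀ t : ℝ, Tendsto (fun n => ψt (t - τ n)) atTop (𝓝 (ψ t)))

theorem AAGood.subseq {V : Type*} [NormedAddCommGroup V] {ψ : ℝ → V} {τ : ℕ → ℝ} {ψt : ℝ → V}
    (h : AAGood ψ τ ψt) {k : ℕ → ℕ} (hk : StrictMono k) : AAGood ψ (fun n => τ (k n)) ψt :=
  ⟨fun t => (h.1 t).comp hk.tendsto_atTop, fun t => (h.2 t).comp hk.tendsto_atTop⟩

theorem exists_common_subseq {ι V : Type*} [NormedAddCommGroup V] (f : ι → ℝ → V)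
    (hf : ∀ i, AlmostAutomorphic (f i)) (σ : ℕ → ℝ) (S : Finset ι) :
    ∃ k : ℕ → ℕ, StrictMono k ∧ ∀ i ∈ S, ∃ g : ℝ → V, AAGood (f i) (fun n => σ (k n)) g := by
  classical
  induction S using Finset.induction_on with
  | empty => exact ⟨id, strictMono_id, by simp⟩
  | insert a S ha ih =>
    obtain ⟨k, hk, h⟩ := ih
    obtain ⟨l, hl, g, hg1, hg2⟩ := (hf a).2 (fun n => σ (k n))
    refine ⟨fun n => k (l n), hk.comp hl, ?_⟩
    intro i hi
    rcases Finset.mem_insert.1 hi with rfl | hi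
    · exact ⟨g, hg1, hg2⟩
    · obtain ⟨g', hg'⟩ := h i hi
      exact ⟨g', hg'.subseq hl⟩

/-! ### Fundamental matrices -/

section Fund
variable {p : ℕ}

instance matrixPseudoMetrizable :
    TopologicalSpace.PseudoMetrizableSpace (Matrix (Fin p) (Fin p) ℂ) :=
  inferInstanceAs (TopologicalSpace.PseudoMetrizableSpace (Fin p → Fin p → ℂ))

theorem norm_one_le_one : ‖(1 : Matrix (Fin p) (Fin p) ℂ)‖ ≤ 1 := by
  rcases isEmpty_or_nonempty (Fin p) with h | h
  · have : (1 : Matrix (Fin p) (Fin p) ℂ) = 0 := Subsingleton.elim _ _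
    rw [this]; simp
  · rw [← Matrix.diagonal_one, Matrix.linfty_opNorm_diagonal]
    simp

variable {A Φ : ℝ → Matrix (Fin p) (Fin p) ℂ}

theorem IsFundamentalMatrix.continuous (h : IsFundamentalMatrix A Φ) : Continuous Φ :=
  continuous_iff_continuousAt.2 fun t => (h.1 t).continuousAt

theorem IsFundamentalMatrix.mul_inv (h : IsFundamentalMatrix A Φ) (t : ℝ) :
    Φ t * (Φ t)⁻¹ = 1 :=
  Matrix.mul_nonsing_inv _ ((Matrix.isUnit_iff_isUnit_det _).1 (h.2 t))

theorem IsFundamentalMatrix.inv_mul (h : IsFundamentalMatrix A Φ) (t : ℝ) :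
    (Φ t)⁻¹ * Φ t = 1 :=
  Matrix.nonsing_inv_mul _ ((Matrix.isUnit_iff_isUnit_det _).1 (h.2 t))

theorem IsFundamentalMatrix.hasDerivAt_inv (h : IsFundamentalMatrix A Φ) (t : ℝ) :
    HasDerivAt (fun u => (Φ u)⁻¹) (-((Φ t)⁻¹ * A t)) t := by
  obtain ⟨x, hx⟩ := h.2 t
  have : CompleteSpace (Matrix (Fin p) (Fin p) ℂ) := FiniteDimensional.complete ℝ _
  have H := hasFDerivAt_ringInverse (𝕜 := ℝ) x
  rw [hx] at H
  have H2 := H.comp_hasDerivAt t (h.1 t)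
  have e : (↑x⁻¹ : Matrix (Fin p) (Fin p) ℂ) = (Φ t)⁻¹ := by
    rw [← hx, Matrix.coe_units_inv]
  have e2 : (fun u => (Φ u)⁻¹) = Ring.inverse ∘ Φ := by
    funext u; simp [Matrix.nonsing_inv_eq_ringInverse]
  rw [e2]
  have e3 : -((Φ t)⁻¹ * A t) = -((↑x⁻¹ : Matrix (Fin p) (Fin p) ℂ) * (A t * Φ t) *
      (↑x⁻¹ : Matrix (Fin p) (Fin p) ℂ)) := by
    rw [e, ← mul_assoc, mul_assoc _ (Φ t), h.mul_inv, mul_one]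
  rw [e3]
  exact H2

theorem IsFundamentalMatrix.continuous_inv (h : IsFundamentalMatrix A Φ) :
    Continuous (fun u => (Φ u)⁻¹) :=
  continuous_iff_continuousAt.2 fun t => (h.hasDerivAt_inv t).continuousAt

theorem IsFundamentalMatrix.shift (h : IsFundamentalMatrix A Φ) (τ : ℝ) :
    IsFundamentalMatrix (fun t => A (t + τ)) (fun t => Φ (t + τ)) :=
  ⟨fun t => (h.1 (t + τ)).comp_add_const t τ, fun _ => h.2 _⟩

theorem IsFundamentalMatrix.reflect (h : IsFundamentalMatrix A Φ) :
    IsFundamentalMatrix (fun t => -A (-t)) (fun t => Φ (-t)) := by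
  refine ⟨fun t => ?_, fun _ => h.2 _⟩
  have := (h.1 (-t)).scomp t (hasDerivAt_neg t)
  have e : -A (-t) * Φ (-t) = (-1 : ℝ) • (A (-t) * Φ (-t)) := by
    rw [neg_one_smul, neg_mul]
  rw [e]
  exact this

theorem IsFundamentalMatrix.bound_fwd (h : IsFundamentalMatrix A Φ) {M : ℝ}
    (hM : ∀ t, ‖A t‖ ≤ M) {s t : ℝ} (hst : s ≤ t) :
    ‖Φ t * (Φ s)⁻¹‖ ≤ Real.exp (M * (t - s)) := by
  have hd : ∀ u, HasDerivAt (fun u => Φ u * (Φ s)⁻¹) (A u * (Φ u * (Φ s)⁻¹)) u := by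
    intro u
    rw [← mul_assoc]
    exact (h.1 u).mul_const _
  have := norm_le_gronwallBound_of_norm_deriv_right_le (f := fun u => Φ u * (Φ s)⁻¹)
    (f' := fun u => A u * (Φ u * (Φ s)⁻¹)) (δ := 1) (K := M) (ε := 0) (a := s) (b := t)
    (fun u _ => (hd u).continuousAt.continuousWithinAt)
    (fun u _ => (hd u).hasDerivWithinAt)
    (by simp only [h.mul_inv]; exact norm_one_le_one)
    (by
      intro u _
      rw [add_zero]
      exact (norm_mul_le _ _).trans (mul_le_mul_of_nonneg_right (hM u) (norm_nonneg _)))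
    t ⟨hst, le_rfl⟩
  rwa [gronwallBound_ε0, one_mul] at this

theorem IsFundamentalMatrix.bound (h : IsFundamentalMatrix A Φ) {M : ℝ}
    (hM : ∀ t, ‖A t‖ ≤ M) (t s : ℝ) :
    ‖Φ t * (Φ s)⁻¹‖ ≤ Real.exp (M * |t - s|) := by
  rcases le_total s t with hst | hst
  · rw [abs_of_nonneg (sub_nonneg.2 hst)]; exact h.bound_fwd hM hst
  · have := h.reflect.bound_fwd (M := M) (fun t => by simpa using hM (-t)) (neg_le_neg hst)
    rw [abs_of_nonpos (sub_nonpos.2 hst)]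
    simp only [neg_neg] at this
    convert this using 3
    ring

theorem IsFundamentalMatrix.diff_bound {B Θ : ℝ → Matrix (Fin p) (Fin p) ℂ}
    (h : IsFundamentalMatrix A Φ) (h' : IsFundamentalMatrix B Θ)
    (hA : Continuous A) (hB : Continuous B) {M : ℝ}
    (hM : ∀ t, ‖A t‖ ≤ M) (hM' : ∀ t, ‖B t‖ ≤ M) (t s : ℝ) :
    ‖Φ t * (Φ s)⁻¹ - Θ t * (Θ s)⁻¹‖ ≤
      Real.exp (2 * M * |t - s|) * |∫ u in s..t, ‖A u - B u‖| := by
  have : CompleteSpace (Matrix (Fin p) (Fin p) ℂ) := FiniteDimensional.complete ℝ _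
  have hM0 : 0 ≤ M := (norm_nonneg _).trans (hM 0)
  set W' : ℝ → Matrix (Fin p) (Fin p) ℂ := fun u =>
    (Θ t * (Θ u)⁻¹) * ((A u - B u) * (Φ u * (Φ s)⁻¹)) with hW'
  have hd : ∀ u, HasDerivAt (fun u => (Θ t * (Θ u)⁻¹) * (Φ u * (Φ s)⁻¹)) (W' u) u := by
    intro u
    have := ((h'.hasDerivAt_inv u).const_mul (Θ t)).mul ((h.1 u).mul_const (Φ s)⁻¹)
    have e : W' u = Θ t * -((Θ u)⁻¹ * B u) * (Φ u * (Φ s)⁻¹) +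
        Θ t * (Θ u)⁻¹ * (A u * Φ u * (Φ s)⁻¹) := by
      simp only [hW']
      noncomm_ring
    rw [e]
    exact this
  have hc : Continuous W' :=
    (continuous_const.mul h'.continuous_inv).mul
      ((hA.sub hB).mul (h.continuous.mul continuous_const))
  have hint := intervalIntegral.integral_eq_sub_of_hasDerivAt (a := s) (b := t)
    (fun u _ => hd u) (hc.intervalIntegrable s t)
  rw [h'.mul_inv, h.mul_inv, one_mul, mul_one] at hint
  rw [← hint]
  have hg : Continuous (fun u => Real.exp (2 * M * |t - s|) * ‖A u - B u‖) :=
    continuous_const.mul (hA.sub hB).norm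
  refine (intervalIntegral.norm_integral_le_abs_of_norm_le
    (g := fun u => Real.exp (2 * M * |t - s|) * ‖A u - B u‖) ?_
    (hg.intervalIntegrable s t)).trans ?_
  · refine (ae_restrict_mem measurableSet_uIoc).mono fun u hu => ?_
    have hu' : u ∈ Set.uIcc s t := Set.uIoc_subset_uIcc hu
    have h1 : |t - u| ≤ |t - s| := Set.abs_sub_right_of_mem_uIcc hu'
    have h2 : |u - s| ≤ |t - s| := Set.abs_sub_left_of_mem_uIcc hu'
    have b1 : ‖Θ t * (Θ u)⁻¹‖ ≤ Real.exp (M * |t - s|) :=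
      (h'.bound hM' t u).trans (Real.exp_le_exp.2 (mul_le_mul_of_nonneg_left h1 hM0))
    have b2 : ‖Φ u * (Φ s)⁻¹‖ ≤ Real.exp (M * |t - s|) :=
      (h.bound hM u s).trans (Real.exp_le_exp.2 (mul_le_mul_of_nonneg_left h2 hM0))
    have e : Real.exp (2 * M * |t - s|) = Real.exp (M * |t - s|) * Real.exp (M * |t - s|) := by
      rw [← Real.exp_add]; congr 1; ring
    calc ‖W' u‖ ≤ ‖Θ t * (Θ u)⁻¹‖ * (‖A u - B u‖ * ‖Φ u * (Φ s)⁻¹‖) :=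
          (norm_mul_le _ _).trans (mul_le_mul_of_nonneg_left (norm_mul_le _ _) (norm_nonneg _))
      _ ≤ Real.exp (M * |t - s|) * (‖A u - B u‖ * Real.exp (M * |t - s|)) := by gcongr
      _ = _ := by rw [e]; ring
  · rw [intervalIntegral.integral_const_mul, abs_mul, abs_of_pos (Real.exp_pos _)]

theorem intervalIntegrable_of_bdd {f : ℝ → ℝ} (hf : StronglyMeasurable f) {C : ℝ}
    (hC : ∀ u, ‖f u‖ ≤ C) (a b : ℝ) : IntervalIntegrable f volume a b :=
  (intervalIntegrable_const (c := C)).mono_fun hf.aestronglyMeasurable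
    (ae_of_all _ fun u => (hC u).trans (le_abs_self _))

/-- The limit evolution operator along a sequence of translations. -/
theorem exists_limit_evolution (h : IsFundamentalMatrix A Φ) (hA : Continuous A) {M : ℝ}
    (hM : ∀ t, ‖A t‖ ≤ M) {τ : ℕ → ℝ} {At : ℝ → Matrix (Fin p) (Fin p) ℂ}
    (hAt : AAGood A τ At) :
    ∃ Ψ : ℝ → ℝ → Matrix (Fin p) (Fin p) ℂ,
      (∀ t s, Tendsto (fun n => Φ (t + τ n) * (Φ (s + τ n))⁻¹) atTop (𝓝 (Ψ t s))) ∧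
      (∀ t s, Tendsto (fun n => Ψ (t - τ n) (s - τ n)) atTop (𝓝 (Φ t * (Φ s)⁻¹))) := by
  have : CompleteSpace (Matrix (Fin p) (Fin p) ℂ) := FiniteDimensional.complete ℝ _
  have hM0 : 0 ≤ M := (norm_nonneg _).trans (hM 0)
  have hAtM : ∀ t, ‖At t‖ ≤ M := fun t =>
    le_of_tendsto (hAt.1 t).norm (Eventually.of_forall fun n => hM _)
  have hAtm : StronglyMeasurable At :=
    stronglyMeasurable_of_tendsto atTop
      (fun n => (hA.comp (continuous_id.add continuous_const) :
        Continuous (fun t => A (t + τ n))).stronglyMeasurable)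
      (tendsto_pi_nhds.2 hAt.1)
  have hAnc : ∀ n, Continuous (fun t => A (t + τ n)) := fun n =>
    hA.comp (continuous_id.add continuous_const)
  set E : ℕ → ℝ → ℝ → ℝ := fun n t s => ∫ u in s..t, ‖A (u + τ n) - At u‖ with hE
  have hnb : ∀ (X Y : Matrix (Fin p) (Fin p) ℂ), ‖X‖ ≤ M → ‖Y‖ ≤ M → ‖‖X - Y‖‖ ≤ 2 * M := by
    intro X Y hX hY
    rw [norm_norm]
    linarith [norm_sub_le X Y]
  have hmE : ∀ n, StronglyMeasurable (fun u => ‖A (u + τ n) - At u‖) := fun n =>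
    ((hAnc n).stronglyMeasurable.sub hAtm).norm
  have hiE : ∀ n t s, IntervalIntegrable (fun u => ‖A (u + τ n) - At u‖) volume s t :=
    fun n t s => intervalIntegrable_of_bdd (hmE n) (fun u => hnb _ _ (hM _) (hAtM _)) s t
  have hE0 : ∀ t s, Tendsto (fun n => |E n t s|) atTop (𝓝 0) := by
    intro t s
    have : Tendsto (fun n => E n t s) atTop (𝓝 (∫ u in s..t, (0 : ℝ))) := by
      refine intervalIntegral.tendsto_integral_filter_of_dominated_convergence (fun _ => 2 * M)
        (Eventually.of_forall fun n => (hmE n).aestronglyMeasurable)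
        (Eventually.of_forall fun n => ae_of_all _ fun u _ => hnb _ _ (hM _) (hAtM _))
        intervalIntegrable_const (ae_of_all _ fun u _ => ?_)
      have := ((hAt.1 u).sub_const (At u)).norm
      simpa using this
    simpa using this.abs
  have hdiff : ∀ n m t s, ‖Φ (t + τ n) * (Φ (s + τ n))⁻¹ - Φ (t + τ m) * (Φ (s + τ m))⁻¹‖ ≤
      Real.exp (2 * M * |t - s|) * (|E n t s| + |E m t s|) := by
    intro n m t s
    refine ((h.shift (τ n)).diff_bound (h.shift (τ m)) (hAnc n) (hAnc m) (fun t => hM _)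
      (fun t => hM _) t s).trans ?_
    refine mul_le_mul_of_nonneg_left ?_ (Real.exp_pos _).le
    have key : |∫ u in s..t, ‖A (u + τ n) - A (u + τ m)‖| ≤ |E n t s + E m t s| := by
      rw [hE]
      simp only
      rw [← intervalIntegral.integral_add (hiE n t s) (hiE m t s)]
      refine intervalIntegral.norm_integral_le_abs_of_norm_le
        (f := fun u => ‖A (u + τ n) - A (u + τ m)‖) (ae_of_all _ fun u => ?_)
        ((hiE n t s).add (hiE m t s))
      rw [norm_norm]
      calc ‖A (u + τ n) - A (u + τ m)‖
          = ‖(A (u + τ n) - At u) - (A (u + τ m) - At u)‖ := by congr 1; abel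
        _ ≤ _ := norm_sub_le _ _
    exact key.trans (abs_add_le _ _)
  have hcau : ∀ t s, CauchySeq (fun n => Φ (t + τ n) * (Φ (s + τ n))⁻¹) := by
    intro t s
    refine Metric.cauchySeq_iff.2 ?_
    intro ε hε
    have h0 : Tendsto (fun n => Real.exp (2 * M * |t - s|) * |E n t s|) atTop (𝓝 0) := by
      simpa using (hE0 t s).const_mul (Real.exp (2 * M * |t - s|))
    obtain ⟨N, hN⟩ := eventually_atTop.1 (h0.eventually (gt_mem_nhds (half_pos hε)))
    refine ⟨N, fun n hn m hm => ?_⟩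
    rw [dist_eq_norm]
    have := hdiff n m t s
    have := hN n hn
    have := hN m hm
    nlinarith
  choose Ψ hΨ using fun t s => cauchySeq_tendsto_of_complete (hcau t s)
  refine ⟨Ψ, hΨ, fun t s => ?_⟩
  have hlim : ∀ n t s, ‖Φ (t + τ n) * (Φ (s + τ n))⁻¹ - Ψ t s‖ ≤
      Real.exp (2 * M * |t - s|) * |E n t s| := by
    intro n t s
    have h1 := ((hΨ t s).const_sub (Φ (t + τ n) * (Φ (s + τ n))⁻¹)).norm
    have h2 : Tendsto (fun m => Real.exp (2 * M * |t - s|) * (|E n t s| + |E m t s|)) atTop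
        (𝓝 (Real.exp (2 * M * |t - s|) * (|E n t s| + 0))) :=
      ((hE0 t s).const_add _).const_mul _
    rw [add_zero] at h2
    exact le_of_tendsto_of_tendsto' h1 h2 (fun m => hdiff n m t s)
  have hF0 : Tendsto (fun n => ∫ u in s..t, ‖A u - At (u - τ n)‖) atTop (𝓝 0) := by
    have : Tendsto (fun n => ∫ u in s..t, ‖A u - At (u - τ n)‖) atTop
        (𝓝 (∫ u in s..t, (0 : ℝ))) := by
      refine intervalIntegral.tendsto_integral_filter_of_dominated_convergence (fun _ => 2 * M)
        (Eventually.of_forall fun n => (StronglyMeasurable.norm (hA.stronglyMeasurable.sub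
          (hAtm.comp_measurable (measurable_id.sub_const (τ n))))).aestronglyMeasurable)
        (Eventually.of_forall fun n => ae_of_all _ fun u _ => hnb _ _ (hM _) (hAtM _))
        intervalIntegrable_const (ae_of_all _ fun u _ => ?_)
      have := ((hAt.2 u).const_sub (A u)).norm
      simpa using this
    simpa using this
  refine tendsto_iff_norm_sub_tendsto_zero.2 ?_
  have hb : Tendsto (fun n => Real.exp (2 * M * |t - s|) * |∫ u in s..t, ‖A u - At (u - τ n)‖|)
      atTop (𝓝 0) := by
    simpa using hF0.abs.const_mul (Real.exp (2 * M * |t - s|))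
  refine squeeze_zero (fun n => norm_nonneg _) (fun n => ?_) hb
  have := hlim n (t - τ n) (s - τ n)
  rw [norm_sub_rev]
  simp only [sub_add_cancel, sub_sub_sub_cancel_right, hE] at this
  have e : ∫ u in (s - τ n)..(t - τ n), ‖A (u + τ n) - At u‖ =
      ∫ u in s..t, ‖A u - At (u - τ n)‖ := by
    rw [← intervalIntegral.integral_comp_sub_right]
    simp
  rwa [e] at this

end Fund

/-! ### The exponential kernel -/

theorem integral_exp_kernel {α : ℝ} (hα : 0 < α) (t : ℝ) :
    ∫ s : ℝ, Real.exp (-α * |t - s|) = 2 / α := by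
  have h1 : ∫ s : ℝ, Real.exp (-α * |t - s|) = ∫ s : ℝ, Real.exp (-α * |s|) :=
    integral_sub_left_eq_self (fun s : ℝ => Real.exp (-α * |s|)) volume t
  rw [h1, integral_comp_abs (f := fun x => Real.exp (-α * x)),
    integral_exp_mul_Ioi (by linarith) 0]
  simp
  field_simp

theorem integrable_exp_kernel {α : ℝ} (hα : 0 < α) (t : ℝ) :
    Integrable (fun s : ℝ => Real.exp (-α * |t - s|)) := by
  refine Integrable.of_integral_ne_zero ?_
  rw [integral_exp_kernel hα]
  positivity

section Green
variable {p : ℕ} {A Φ : ℝ → Matrix (Fin p) (Fin p) ℂ}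

theorem green_stronglyMeasurable (h : IsFundamentalMatrix A Φ) (P : Matrix (Fin p) (Fin p) ℂ)
    {φ : ℝ → (Fin p → ℂ)} (hφ : Continuous φ) (t : ℝ) :
    StronglyMeasurable (fun s => (GreenMat Φ P t s).mulVec (φ s)) := by
  have h1 : Continuous (fun s => (Φ t * (Φ s)⁻¹ * P).mulVec (φ s)) :=
    Continuous.matrix_mulVec ((continuous_const.mul h.continuous_inv).mul continuous_const) hφ
  have h2 : Continuous (fun s => (-(Φ t * (Φ s)⁻¹ * (1 - P))).mulVec (φ s)) :=
    Continuous.matrix_mulVec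
      ((continuous_const.mul h.continuous_inv).mul continuous_const).neg hφ
  have e : (fun s => (GreenMat Φ P t s).mulVec (φ s)) = fun s => if s ∈ Set.Iic t then
      (Φ t * (Φ s)⁻¹ * P).mulVec (φ s) else (-(Φ t * (Φ s)⁻¹ * (1 - P))).mulVec (φ s) := by
    funext s
    simp only [GreenMat, Set.mem_Iic]
    split_ifs <;> rfl
  rw [e]
  exact StronglyMeasurable.ite measurableSet_Iic h1.stronglyMeasurable h2.stronglyMeasurable

theorem mulVec_norm_le {G : Matrix (Fin p) (Fin p) ℂ} {v : Fin p → ℂ} {c C α x : ℝ}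
    (hG : ‖G‖ ≤ c * Real.exp (-α * x)) (hv : ‖v‖ ≤ C) :
    ‖G.mulVec v‖ ≤ c * C * Real.exp (-α * x) :=
  calc ‖G.mulVec v‖ ≤ ‖G‖ * ‖v‖ := Matrix.linfty_opNorm_mulVec _ _
    _ ≤ (c * Real.exp (-α * x)) * C :=
      mul_le_mul hG hv (norm_nonneg _) ((norm_nonneg _).trans hG)
    _ = _ := by ring

theorem green_continuous (h : IsFundamentalMatrix A Φ) (P : Matrix (Fin p) (Fin p) ℂ)
    {c α : ℝ} (hc : 0 < c) (hα : 0 < α)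
    (hdich : ∀ t s : ℝ, ‖GreenMat Φ P t s‖ ≤ c * Real.exp (-α * |t - s|))
    {φ : ℝ → (Fin p → ℂ)} (hφ : Continuous φ) {C : ℝ} (hC : ∀ t, ‖φ t‖ ≤ C) :
    Continuous (fun t => ∫ s : ℝ, (GreenMat Φ P t s).mulVec (φ s)) := by
  have hC0 : 0 ≤ C := (norm_nonneg _).trans (hC 0)
  refine continuous_iff_continuousAt.2 fun t₀ => ?_
  refine continuousAt_of_dominated
    (bound := fun s => c * C * Real.exp α * Real.exp (-α * |t₀ - s|))
    (Eventually.of_forall fun t => (green_stronglyMeasurable h P hφ t).aestronglyMeasurable)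
    ?_ ((integrable_exp_kernel hα t₀).const_mul _) ?_
  · filter_upwards [Metric.ball_mem_nhds t₀ one_pos] with t ht
    refine ae_of_all _ fun s => ?_
    refine (mulVec_norm_le (hdich t s) (hC s)).trans ?_
    rw [mul_assoc (c * C), ← Real.exp_add]
    refine mul_le_mul_of_nonneg_left (Real.exp_le_exp.2 ?_) (by positivity)
    have h1 : |t - t₀| < 1 := by simpa [Real.dist_eq] using ht
    have h2 : |t₀ - s| ≤ |t - s| + |t - t₀| := by
      rw [abs_sub_comm t t₀, add_comm]
      exact abs_sub_le t₀ t s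
    nlinarith
  · have hne : ∀ᵐ s : ℝ, s ≠ t₀ := by
      simp [ae_iff]
    filter_upwards [hne] with s hs
    rcases lt_or_gt_of_ne hs with hlt | hgt
    · have hcont : Continuous (fun t => (Φ t * (Φ s)⁻¹ * P).mulVec (φ s)) :=
        Continuous.matrix_mulVec ((h.continuous.mul continuous_const).mul continuous_const)
          continuous_const
      refine hcont.continuousAt.congr ?_
      filter_upwards [lt_mem_nhds hlt] with t ht
      simp [GreenMat, ht.le]
    · have hcont : Continuous (fun t => (-(Φ t * (Φ s)⁻¹ * (1 - P))).mulVec (φ s)) :=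
        Continuous.matrix_mulVec
          ((h.continuous.mul continuous_const).mul continuous_const).neg continuous_const
      refine hcont.continuousAt.congr ?_
      filter_upwards [gt_mem_nhds hgt] with t ht
      simp [GreenMat, not_le.2 ht]

theorem green_bound (P : Matrix (Fin p) (Fin p) ℂ)
    {c α : ℝ} (hα : 0 < α)
    (hdich : ∀ t s : ℝ, ‖GreenMat Φ P t s‖ ≤ c * Real.exp (-α * |t - s|))
    {φ : ℝ → (Fin p → ℂ)} {C : ℝ} (hC : ∀ t, ‖φ t‖ ≤ C) (t : ℝ) :
    ‖∫ s : ℝ, (GreenMat Φ P t s).mulVec (φ s)‖ ≤ (2 * c / α) * C := by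
  refine (norm_integral_le_of_norm_le ((integrable_exp_kernel hα t).const_mul (c * C))
    (ae_of_all _ fun s => mulVec_norm_le (hdich t s) (hC s))).trans ?_
  rw [integral_const_mul, integral_exp_kernel hα]
  apply le_of_eq
  ring

theorem tendsto_integral_kernel {F : ℕ → ℝ → (Fin p → ℂ)} {f : ℝ → (Fin p → ℂ)} {K α t : ℝ}
    (hα : 0 < α) (hF : ∀ n, StronglyMeasurable (F n))
    (hb : ∀ n s, ‖F n s‖ ≤ K * Real.exp (-α * |t - s|))
    (hl : ∀ s, Tendsto (fun n => F n s) atTop (𝓝 (f s))) :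
    Tendsto (fun n => ∫ s, F n s) atTop (𝓝 (∫ s, f s)) :=
  tendsto_integral_of_dominated_convergence (fun s => K * Real.exp (-α * |t - s|))
    (fun n => (hF n).aestronglyMeasurable) ((integrable_exp_kernel hα t).const_mul K)
    (fun n => ae_of_all _ (hb n)) (ae_of_all _ hl)

theorem tendsto_mulVec {X : ℕ → Matrix (Fin p) (Fin p) ℂ} {Y : Matrix (Fin p) (Fin p) ℂ}
    {v : ℕ → (Fin p → ℂ)} {w : Fin p → ℂ} (hX : Tendsto X atTop (𝓝 Y))
    (hv : Tendsto v atTop (𝓝 w)) :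
    Tendsto (fun n => (X n).mulVec (v n)) atTop (𝓝 (Y.mulVec w)) := by
  refine tendsto_pi_nhds.2 fun i => ?_
  have hX' : ∀ j, Tendsto (fun n => X n i j) atTop (𝓝 (Y i j)) := fun j =>
    tendsto_pi_nhds.1 (tendsto_pi_nhds.1 hX i) j
  simp only [Matrix.mulVec, dotProduct]
  exact tendsto_finsetSum _ fun j _ => (hX' j).mul (tendsto_pi_nhds.1 hv j)

theorem green_aa (h : IsFundamentalMatrix A Φ) (hA : Continuous A) {M : ℝ}
    (hM : ∀ t, ‖A t‖ ≤ M) (P : Matrix (Fin p) (Fin p) ℂ)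
    {c α : ℝ} (hα : 0 < α)
    (hdich : ∀ t s : ℝ, ‖GreenMat Φ P t s‖ ≤ c * Real.exp (-α * |t - s|))
    {φ : ℝ → (Fin p → ℂ)} (hφ : Continuous φ) {C : ℝ} (hC : ∀ t, ‖φ t‖ ≤ C)
    {τ : ℕ → ℝ} {At : ℝ → Matrix (Fin p) (Fin p) ℂ} (hAt : AAGood A τ At)
    {φt : ℝ → (Fin p → ℂ)} (hφt : AAGood φ τ φt) :
    ∃ g, AAGood (fun t => ∫ s : ℝ, (GreenMat Φ P t s).mulVec (φ s)) τ g := by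
  obtain ⟨Ψ, hΨ1, hΨ2⟩ := exists_limit_evolution h hA hM hAt
  have hφtC : ∀ t, ‖φt t‖ ≤ C := fun t =>
    le_of_tendsto (hφt.1 t).norm (Eventually.of_forall fun n => hC _)
  set Gt : ℝ → ℝ → Matrix (Fin p) (Fin p) ℂ := fun t s =>
    if s ≤ t then Ψ t s * P else -(Ψ t s * (1 - P)) with hGt
  have hG1 : ∀ t s, Tendsto (fun n => GreenMat Φ P (t + τ n) (s + τ n)) atTop (𝓝 (Gt t s)) := by
    intro t s
    simp only [GreenMat, hGt, add_le_add_iff_right]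
    split_ifs
    · exact (hΨ1 t s).mul_const P
    · exact ((hΨ1 t s).mul_const (1 - P)).neg
  have hG2 : ∀ t s, Tendsto (fun n => Gt (t - τ n) (s - τ n)) atTop (𝓝 (GreenMat Φ P t s)) := by
    intro t s
    simp only [GreenMat, hGt, sub_le_sub_iff_right]
    split_ifs
    · exact (hΨ2 t s).mul_const P
    · exact ((hΨ2 t s).mul_const (1 - P)).neg
  have hGn : ∀ n t s, ‖GreenMat Φ P (t + τ n) (s + τ n)‖ ≤ c * Real.exp (-α * |t - s|) := by
    intro n t s
    simpa using hdich (t + τ n) (s + τ n)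
  have hGtb : ∀ t s, ‖Gt t s‖ ≤ c * Real.exp (-α * |t - s|) := fun t s =>
    le_of_tendsto (hG1 t s).norm (Eventually.of_forall fun n => hGn n t s)
  have hGtn : ∀ n t s, ‖Gt (t - τ n) (s - τ n)‖ ≤ c * Real.exp (-α * |t - s|) := by
    intro n t s
    simpa using hGtb (t - τ n) (s - τ n)
  have hl1 : ∀ t s, Tendsto (fun n => (GreenMat Φ P (t + τ n) (s + τ n)).mulVec (φ (s + τ n)))
      atTop (𝓝 ((Gt t s).mulVec (φt s))) := fun t s => tendsto_mulVec (hG1 t s) (hφt.1 s)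
  have hm1 : ∀ t n, StronglyMeasurable
      (fun s => (GreenMat Φ P (t + τ n) (s + τ n)).mulVec (φ (s + τ n))) := fun t n =>
    (green_stronglyMeasurable h P hφ (t + τ n)).comp_measurable (measurable_id.add_const (τ n))
  have hm2 : ∀ t, StronglyMeasurable (fun s => (Gt t s).mulVec (φt s)) := fun t =>
    stronglyMeasurable_of_tendsto atTop (hm1 t) (tendsto_pi_nhds.2 (hl1 t))
  refine ⟨fun t => ∫ s, (Gt t s).mulVec (φt s), fun t => ?_, fun t => ?_⟩
  · have := tendsto_integral_kernel (K := c * C) (t := t) hα (hm1 t)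
      (fun n s => mulVec_norm_le (hGn n t s) (hC _)) (hl1 t)
    refine this.congr fun n => ?_
    exact integral_add_right_eq_self
      (fun s => (GreenMat Φ P (t + τ n) s).mulVec (φ s)) (τ n)
  · have := tendsto_integral_kernel (K := c * C) (t := t) hα
      (F := fun n s => (Gt (t - τ n) (s - τ n)).mulVec (φt (s - τ n)))
      (f := fun s => (GreenMat Φ P t s).mulVec (φ s))
      (fun n => (hm2 (t - τ n)).comp_measurable (measurable_id.sub_const (τ n)))
      (fun n s => mulVec_norm_le (hGtn n t s) (hφtC _))
      (fun s => tendsto_mulVec (hG2 t s) (hφt.2 s))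
    refine this.congr fun n => ?_
    exact integral_sub_right_eq_self
      (fun s => (Gt (t - τ n) s).mulVec (φt s)) (τ n)

end Green

theorem green_operator_preserves_bounded_continuous_and_almost_automorphic {p : ℕ}
    (A ΦA : ℝ → Matrix (Fin p) (Fin p) ℂ)
    (hAc : Continuous A) (hAb : ∃ C, ∀ t, ‖A t‖ ≤ C)
    (hAaa : ∀ i j : Fin p, AlmostAutomorphic (fun t => A t i j))
    (hΦA : IsFundamentalMatrix A ΦA)
    (P : Matrix (Fin p) (Fin p) ℂ) (hP : P * P = P)
    (hPcomm : ∀ t : ℝ, ΦA t * P = P * ΦA t)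
    (c α : ℝ) (hc : 0 < c) (hα : 0 < α)
    (hdich : ∀ t s : ℝ, ‖GreenMat ΦA P t s‖ ≤ c * Real.exp (-α * |t - s|))
    (φ : ℝ → (Fin p → ℂ)) (hφc : Continuous φ) (hφb : ∃ C, ∀ t, ‖φ t‖ ≤ C) :
    Continuous (fun t => ∫ s : ℝ, (GreenMat ΦA P t s).mulVec (φ s)) ∧
    (∀ t : ℝ, ‖∫ s : ℝ, (GreenMat ΦA P t s).mulVec (φ s)‖ ≤ (2 * c / α) * ⨆ t : ℝ, ‖φ t‖) ∧
    (AlmostAutomorphic φ →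
      AlmostAutomorphic (fun t => ∫ s : ℝ, (GreenMat ΦA P t s).mulVec (φ s))) := by
  obtain ⟨C, hC⟩ := hφb
  obtain ⟨M, hM⟩ := hAb
  have hcont := green_continuous hΦA P hc hα hdich hφc hC
  refine ⟨hcont, fun t => ?_, fun hφaa => ⟨hcont, fun σ => ?_⟩⟩
  · have hbdd : BddAbove (Set.range fun t => ‖φ t‖) := ⟨C, by rintro _ ⟨t, rfl⟩; exact hC t⟩
    exact green_bound P hα hdich (fun t => le_ciSup hbdd t) t
  · obtain ⟨k, hk, hg⟩ := exists_common_subseq (fun (q : Fin p × Fin p) t => A t q.1 q.2)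
      (fun q => hAaa q.1 q.2) σ Finset.univ
    choose g hg using fun q => hg q (Finset.mem_univ q)
    obtain ⟨l, hl, φt, h1, h2⟩ := hφaa.2 (fun n => σ (k n))
    have hAt : AAGood A (fun n => σ (k n)) (fun t => Matrix.of fun i j => g (i, j) t) :=
      ⟨fun t => tendsto_pi_nhds.2 fun i => tendsto_pi_nhds.2 fun j => (hg (i, j)).1 t,
        fun t => tendsto_pi_nhds.2 fun i => tendsto_pi_nhds.2 fun j => (hg (i, j)).2 t⟩
    obtain ⟨G, hG⟩ := green_aa hΦA hAc hM P hα hdich hφc hC (hAt.subseq hl)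
      (φt := φt) ⟨h1, h2⟩
    exact ⟨fun n => k (l n), hk.comp hl, G, hG.1, hG.2⟩
end

section
/- Let V be a complex Hilbert space and A : V → V a compact continuous linear operator. Let (V_k)_{k∈ℕ} be a family of finite-dimensional, pairwise orthogonal closed subspaces of V whose algebraic span is dense in V (so V is the Hilbert sum ⊕_{k} V_k), and assume that for each k the orthogonal projection P_k of V onto V_k commutes with A. If f : ℝ → V is bounded, continuous and almost automorphic, then every bounded differentiable solution y of y'(t) = A(y(t)) + f(t) on ℝ is almost automorphic. -/
open MeasureTheory Filter Topology

namespace AAux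

variable {V W : Type*} [NormedAddCommGroup V] [NormedAddCommGroup W]

theorem const (c : V) : AlmostAutomorphic (fun _ : ℝ => c) :=
  ⟨continuous_const, fun _ => ⟨id, strictMono_id, fun _ => c,
    fun _ => tendsto_const_nhds, fun _ => tendsto_const_nhds⟩⟩

theorem comp {ψ : ℝ → V} (h : AlmostAutomorphic ψ) {g : V → W} (hg : Continuous g) :
    AlmostAutomorphic (fun t => g (ψ t)) := by
  refine ⟨hg.comp h.1, fun σ => ?_⟩
  obtain ⟨k, hk, ψt, h1, h2⟩ := h.2 σ
  exact ⟨k, hk, fun t => g (ψt t), fun t => (hg.tendsto _).comp (h1 t),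
    fun t => (hg.tendsto _).comp (h2 t)⟩

theorem pair {ψ : ℝ → V} {χ : ℝ → W} (h : AlmostAutomorphic ψ) (h' : AlmostAutomorphic χ) :
    AlmostAutomorphic (fun t => (ψ t, χ t)) := by
  refine ⟨h.1.prodMk h'.1, fun σ => ?_⟩
  obtain ⟨k, hk, ψt, h1, h2⟩ := h.2 σ
  obtain ⟨j, hj, χt, h3, h4⟩ := h'.2 (σ ∘ k)
  refine ⟨k ∘ j, hk.comp hj, fun t => (ψt t, χt t), fun t => ?_, fun t => ?_⟩
  · exact ((h1 t).comp hj.tendsto_atTop).prodMk_nhds (h3 t)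
  · exact ((h2 t).comp hj.tendsto_atTop).prodMk_nhds (h4 t)

theorem add {ψ χ : ℝ → V} (h : AlmostAutomorphic ψ) (h' : AlmostAutomorphic χ) :
    AlmostAutomorphic (fun t => ψ t + χ t) :=
  comp (pair h h') (g := fun p : V × V => p.1 + p.2) continuous_add

theorem mul {ψ χ : ℝ → ℂ} (h : AlmostAutomorphic ψ) (h' : AlmostAutomorphic χ) :
    AlmostAutomorphic (fun t => ψ t * χ t) :=
  comp (pair h h') (g := fun p : ℂ × ℂ => p.1 * p.2) continuous_mul

theorem reflect {ψ : ℝ → V} (h : AlmostAutomorphic ψ) :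
    AlmostAutomorphic (fun t => ψ (-t)) := by
  refine ⟨h.1.comp continuous_neg, fun σ => ?_⟩
  obtain ⟨k, hk, ψt, h1, h2⟩ := h.2 (fun n => - σ n)
  refine ⟨k, hk, fun t => ψt (-t), fun t => ?_, fun t => ?_⟩
  · refine (h1 (-t)).congr fun n => ?_
    congr 1; ring
  · refine (h2 (-t)).congr fun n => ?_
    congr 1; ring

theorem bdd {ψ : ℝ → V} (h : AlmostAutomorphic ψ) : ∃ C, ∀ t, ‖ψ t‖ ≤ C := by
  by_contra! hc
  choose σ hσ using fun n : ℕ => hc n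
  obtain ⟨k, hk, ψt, h1, -⟩ := h.2 σ
  have h3 := (h1 0).norm
  have h4 : Tendsto (fun n => ‖ψ (0 + σ (k n))‖) atTop atTop := by
    refine tendsto_atTop_mono (f := fun n => ((k n : ℕ) : ℝ)) (fun n => ?_)
      (tendsto_natCast_atTop_atTop.comp hk.tendsto_atTop)
    rw [zero_add]; exact (hσ _).le
  exact not_tendsto_nhds_of_tendsto_atTop h4 _ h3

theorem recur {ψ : ℝ → V} (h : AlmostAutomorphic ψ) {U : Set V} (hU : IsOpen U) {t₀ : ℝ}
    (ht : ψ t₀ ∈ U) : ∃ L : ℝ, ∀ s, ∃ t, |t - s| ≤ L ∧ ψ t ∈ U := by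
  by_contra! hc
  choose σ hσ using fun n : ℕ => hc n
  obtain ⟨k, hk, ψt, h1, h2⟩ := h.2 σ
  have h3 : ∀ t, ψt t ∈ Uᶜ := by
    intro t
    refine hU.isClosed_compl.mem_of_tendsto (h1 t) ?_
    have := (tendsto_natCast_atTop_atTop (R := ℝ)).comp hk.tendsto_atTop
    filter_upwards [this.eventually_ge_atTop |t|] with n hn
    refine hσ (k n) _ ?_
    simpa using hn
  exact hU.isClosed_compl.mem_of_tendsto (h2 t₀) (Eventually.of_forall fun n => h3 _) ht

theorem diag (Q : ℕ → (ℕ → ℝ) → Prop)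
    (hsub : ∀ N σ (j : ℕ → ℕ), Tendsto j atTop atTop → Q N σ → Q N (σ ∘ j))
    (hev : ∀ N σ σ', (∀ᶠ n in atTop, σ n = σ' n) → Q N σ → Q N σ')
    (hex : ∀ N σ, ∃ k : ℕ → ℕ, StrictMono k ∧ Q N (σ ∘ k)) (σ : ℕ → ℝ) :
    ∃ k : ℕ → ℕ, StrictMono k ∧ ∀ N, Q N (σ ∘ k) := by
  choose K hK hQ using hex
  let φ : ℕ → ℕ → ℕ := fun N => Nat.rec id (fun N f => f ∘ K N (σ ∘ f)) N
  have hφs : ∀ N, φ (N+1) = φ N ∘ K N (σ ∘ φ N) := fun N => rfl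
  have hφm : ∀ N, StrictMono (φ N) := by
    intro N
    induction N with
    | zero => exact strictMono_id
    | succ N ih => rw [hφs]; exact ih.comp (hK _ _)
  have hθ : ∀ N d, ∃ θ : ℕ → ℕ, StrictMono θ ∧ φ (N + d) = φ N ∘ θ := by
    intro N d
    induction d with
    | zero => exact ⟨id, strictMono_id, rfl⟩
    | succ d ih =>
      obtain ⟨θ, h1, h2⟩ := ih
      refine ⟨θ ∘ K (N+d) (σ ∘ φ (N+d)), h1.comp (hK _ _), ?_⟩
      rw [← add_assoc, hφs, ← Function.comp_assoc, ← h2]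
  choose θ hθm hθe using hθ
  refine ⟨fun n => φ n n, strictMono_nat_of_lt_succ fun n => ?_, fun N => ?_⟩
  · rw [hφs]
    exact hφm n (lt_of_lt_of_le (Nat.lt_succ_self n) ((hK _ _).le_apply))
  · have h1 : Q N (σ ∘ φ (N+1)) := by
      rw [hφs]; exact hQ N (σ ∘ φ N)
    have h2 := hsub N _ (fun n => θ (N+1) (n - (N+1)) n)
      (tendsto_atTop_mono (fun n => (hθm _ _).le_apply) tendsto_id) h1
    refine hev N _ _ ?_ h2
    filter_upwards [eventually_ge_atTop (N+1)] with n hn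
    have := congrFun (hθe (N+1) (n-(N+1))) n
    rw [Nat.add_sub_cancel' hn] at this
    simp [this]

theorem unif [CompleteSpace V] {ψ : ℝ → V} (hc : Continuous ψ) (S : ℕ → ℝ → V)
    (hS : ∀ N, AlmostAutomorphic (S N)) (hu : TendstoUniformly S ψ atTop) :
    AlmostAutomorphic ψ := by
  refine ⟨hc, fun σ => ?_⟩
  obtain ⟨k, hk, hQ⟩ := diag (fun N σ => ∃ ψt : ℝ → V,
    (∀ t : ℝ, Tendsto (fun n => S N (t + σ n)) atTop (𝓝 (ψt t))) ∧
    (∀ t : ℝ, Tendsto (fun n => ψt (t - σ n)) atTop (𝓝 (S N t))))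
    (by
      rintro N σ j hj ⟨ψt, h1, h2⟩
      exact ⟨ψt, fun t => (h1 t).comp hj, fun t => (h2 t).comp hj⟩)
    (by
      rintro N σ σ' hj ⟨ψt, h1, h2⟩
      refine ⟨ψt, fun t => (h1 t).congr' ?_, fun t => (h2 t).congr' ?_⟩
      · filter_upwards [hj] with n hn; rw [hn]
      · filter_upwards [hj] with n hn; rw [hn])
    (fun N σ => (hS N).2 σ) σ
  choose G h1 h2 using hQ
  have hcau : UniformCauchySeqOn G atTop Set.univ := by
    have h3 := (tendstoUniformlyOn_univ.2 hu).uniformCauchySeqOn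
    rw [Metric.uniformCauchySeqOn_iff] at h3 ⊢
    intro ε hε
    obtain ⟨N, hN⟩ := h3 (ε/2) (by positivity)
    refine ⟨N, fun m hm n hn t _ => lt_of_le_of_lt ?_ (half_lt_self hε)⟩
    exact le_of_tendsto ((h1 m t).dist (h1 n t))
      (Eventually.of_forall fun i => (hN m hm n hn _ (Set.mem_univ _)).le)
  have hlim : ∀ t, ∃ g, Tendsto (fun N => G N t) atTop (𝓝 g) := fun t =>
    cauchySeq_tendsto_of_complete (hcau.cauchySeq (Set.mem_univ t))
  choose g hg using hlim
  have hGu : TendstoUniformly G g atTop := by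
    rw [← tendstoUniformlyOn_univ]
    exact hcau.tendstoUniformlyOn_of_tendsto fun t _ => hg t
  refine ⟨k, hk, g, fun t => ?_, fun t => ?_⟩
  · have h5 : TendstoUniformlyOnFilter (fun N n => S N (t + σ (k n))) (fun n => ψ (t + σ (k n)))
        atTop atTop :=
      ((hu.comp (fun n => t + σ (k n))).tendstoUniformlyOnFilter).mono_right le_top
    exact h5.tendsto_of_eventually_tendsto (Eventually.of_forall fun N => h1 N t) (hg t)
  · have h5 : TendstoUniformlyOnFilter (fun N n => G N (t - σ (k n))) (fun n => g (t - σ (k n)))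
        atTop atTop :=
      ((hGu.comp (fun n => t - σ (k n))).tendstoUniformlyOnFilter).mono_right le_top
    exact h5.tendsto_of_eventually_tendsto (Eventually.of_forall fun N => h2 N t) (hu.tendsto_at t)


theorem shift_nonpos {F : ℝ → ℝ} {c C : ℝ} (hb : ∀ t, F t ≤ C)
    (h : ∀ M, (∀ t, F t ≤ M) → ∀ t, F t + c ≤ M) : c ≤ 0 := by
  have hbdd : BddAbove (Set.range F) := ⟨C, by rintro _ ⟨t, rfl⟩; exact hb t⟩
  have h1 := h (⨆ t, F t) (fun t => le_ciSup hbdd t)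
  have h2 : (⨆ t, F t) ≤ (⨆ t, F t) - c := ciSup_le fun t => by linarith [h1 t]
  linarith

theorem integral_real {F f : ℝ → ℝ} (hf : AlmostAutomorphic f)
    (hF : ∀ t, HasDerivAt F (f t) t) {C : ℝ} (hb : ∀ t, |F t| ≤ C) : AlmostAutomorphic F := by
  have hFc : Continuous F := continuous_iff_continuousAt.2 fun t => (hF t).continuousAt
  refine ⟨hFc, fun σ => ?_⟩
  obtain ⟨k, hk, ft, h1, h2⟩ := hf.2 σ
  obtain ⟨D, hD⟩ := bdd hf
  have hcpt : ∀ u : ℕ → ℝ, (∀ n, |u n| ≤ C) → ∃ a, ∃ j : ℕ → ℕ, StrictMono j ∧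
      Tendsto (u ∘ j) atTop (𝓝 a) := by
    intro u hu
    obtain ⟨a, -, j, hj, h⟩ := (isCompact_Icc (a := -C) (b := C)).tendsto_subseq
      (x := u) (fun n => abs_le.1 (hu n))
    exact ⟨a, j, hj, h⟩
  have hFI : ∀ s t, ∫ x in s..t, f x = F t - F s := fun s t =>
    intervalIntegral.integral_eq_sub_of_hasDerivAt (fun x _ => hF x)
      (hf.1.intervalIntegrable _ _)
  have hftm : Measurable ft := measurable_of_tendsto_metrizable
    (f := fun n t => f (t + σ (k n)))
    (fun n => (hf.1.comp (continuous_id.add continuous_const)).measurable)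
    (tendsto_pi_nhds.2 h1)
  have hftb : ∀ t, ‖ft t‖ ≤ D := fun t =>
    le_of_tendsto (h1 t).norm (Eventually.of_forall fun n => hD _)
  have hfti : ∀ s t, IntervalIntegrable ft volume s t := fun s t =>
    (intervalIntegrable_const (c := D)).mono_fun hftm.aestronglyMeasurable
      (Eventually.of_forall fun x => (hftb x).trans (le_abs_self D))
  obtain ⟨a, j, hj, ha⟩ := hcpt (fun n => F (σ (k n))) (fun n => hb _)
  let Ft : ℝ → ℝ := fun t => a + ∫ x in (0:ℝ)..t, ft x
  have hFt1 : ∀ t, Tendsto (fun n => F (t + σ (k (j n)))) atTop (𝓝 (Ft t)) := by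
    intro t
    have h3 : Tendsto (fun n => ∫ x in (0:ℝ)..t, f (x + σ (k (j n)))) atTop
        (𝓝 (∫ x in (0:ℝ)..t, ft x)) := by
      refine intervalIntegral.tendsto_integral_filter_of_dominated_convergence (fun _ => D)
        (Eventually.of_forall fun n => ?_) (Eventually.of_forall fun n => ?_) ?_ ?_
      · exact (hf.1.comp (continuous_id.add continuous_const)).aestronglyMeasurable
      · exact Eventually.of_forall fun x _ => hD _
      · exact intervalIntegrable_const
      · exact Eventually.of_forall fun x _ => (h1 x).comp hj.tendsto_atTop
    refine (ha.add h3).congr fun n => ?_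
    rw [intervalIntegral.integral_comp_add_right (fun x => f x), hFI]
    simp
  have hFtb : ∀ M, (∀ t, F t ≤ M) → ∀ t, Ft t ≤ M := fun M hM t =>
    le_of_tendsto (hFt1 t) (Eventually.of_forall fun n => hM _)
  have hFtb' : ∀ M, (∀ t, M ≤ F t) → ∀ t, M ≤ Ft t := fun M hM t =>
    ge_of_tendsto (hFt1 t) (Eventually.of_forall fun n => hM _)
  have hFtab : ∀ t, |Ft t| ≤ C := fun t => abs_le.2
    ⟨hFtb' _ (fun t => (abs_le.1 (hb t)).1) t, hFtb _ (fun t => (abs_le.1 (hb t)).2) t⟩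
  obtain ⟨b, i, hi, hb'⟩ := hcpt (fun n => Ft (-σ (k (j n)))) (fun n => hFtab _)
  have hFt2 : ∀ t, Tendsto (fun n => Ft (t - σ (k (j (i n))))) atTop (𝓝 (F t + (b - F 0))) := by
    intro t
    have h3 : Tendsto (fun n => ∫ x in (0:ℝ)..t, ft (x - σ (k (j (i n))))) atTop
        (𝓝 (∫ x in (0:ℝ)..t, f x)) := by
      refine intervalIntegral.tendsto_integral_filter_of_dominated_convergence (fun _ => D)
        (Eventually.of_forall fun n => ?_) (Eventually.of_forall fun n => ?_) ?_ ?_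
      · exact (hftm.comp (measurable_id.sub_const _)).aestronglyMeasurable
      · exact Eventually.of_forall fun x _ => hftb _
      · exact intervalIntegrable_const
      · exact Eventually.of_forall fun x _ => (h2 x).comp (hj.comp hi).tendsto_atTop
    have h4 := hb'.add h3
    rw [hFI] at h4
    have : F t + (b - F 0) = b + (F t - F 0) := by ring
    rw [this]
    refine h4.congr fun n => ?_
    rw [intervalIntegral.integral_comp_sub_right (fun x => ft x)]
    simp only [Ft, Function.comp, zero_sub]
    rw [add_assoc, intervalIntegral.integral_add_adjacent_intervals (hfti _ _) (hfti _ _)]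
  have hc1 : b - F 0 ≤ 0 := shift_nonpos (F := F) (C := C) (fun t => (abs_le.1 (hb t)).2)
    fun M hM t => le_of_tendsto (hFt2 t) (Eventually.of_forall fun n => hFtb M hM _)
  have hc2 : -(b - F 0) ≤ 0 := shift_nonpos (F := fun t => - F t) (C := C)
    (fun t => by linarith [(abs_le.1 (hb t)).1])
    fun M hM t => by
      have := ge_of_tendsto (hFt2 t) (Eventually.of_forall fun n =>
        hFtb' (-M) (fun t => by linarith [hM t]) _)
      linarith
  have hc : b - F 0 = 0 := by linarith
  refine ⟨k ∘ j ∘ i, hk.comp (hj.comp hi), Ft, fun t => (hFt1 t).comp hi.tendsto_atTop,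
    fun t => ?_⟩
  have := hFt2 t
  rw [hc, add_zero] at this
  exact this

theorem integral_complex {F f : ℝ → ℂ} (hf : AlmostAutomorphic f)
    (hF : ∀ t, HasDerivAt F (f t) t) {C : ℝ} (hb : ∀ t, ‖F t‖ ≤ C) : AlmostAutomorphic F := by
  have hr : AlmostAutomorphic (fun t => (F t).re) :=
    integral_real (comp hf Complex.continuous_re)
      (fun t => Complex.reCLM.hasFDerivAt.comp_hasDerivAt t (hF t))
      (C := C) (fun t => (Complex.abs_re_le_norm _).trans (hb t))
  have hi : AlmostAutomorphic (fun t => (F t).im) :=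
    integral_real (comp hf Complex.continuous_im)
      (fun t => Complex.imCLM.hasFDerivAt.comp_hasDerivAt t (hF t))
      (C := C) (fun t => (Complex.abs_im_le_norm _).trans (hb t))
  have := comp (pair hr hi) (g := fun p : ℝ × ℝ => (p.1 : ℂ) + p.2 * Complex.I) (by fun_prop)
  simpa [Complex.re_add_im] using this

theorem exp_aa {l : ℂ} (hl : l.re = 0) : AlmostAutomorphic (fun t : ℝ => Complex.exp (l * t)) := by
  refine ⟨by fun_prop, fun σ => ?_⟩
  have hn : ∀ t : ℝ, ‖Complex.exp (l * t)‖ = 1 := fun t => by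
    simp [Complex.norm_exp, hl]
  obtain ⟨w, hw, k, hk, h⟩ := (isCompact_sphere (0:ℂ) 1).tendsto_subseq
    (x := fun n => Complex.exp (l * σ n)) (fun n => by simpa using hn (σ n))
  have hw0 : w ≠ 0 := by
    rintro rfl
    simp at hw
  refine ⟨k, hk, fun t => Complex.exp (l * t) * w, fun t => ?_, fun t => ?_⟩
  · refine (h.const_mul (Complex.exp (l * t))).congr fun n => ?_
    simp only [Function.comp, ← Complex.exp_add]
    congr 1; push_cast; ring
  · have := (((h.inv₀ hw0).const_mul (Complex.exp (l * t))).mul_const w)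
    rw [mul_assoc, inv_mul_cancel₀ hw0, mul_one] at this
    refine this.congr fun n => ?_
    simp only [Function.comp, ← Complex.exp_neg, ← Complex.exp_add]
    congr 2; push_cast; ring

theorem hasDerivAt_exp (l : ℂ) (t : ℝ) :
    HasDerivAt (fun t : ℝ => Complex.exp (l * t)) (l * Complex.exp (l * t)) t := by
  have h1 : HasDerivAt (fun t : ℝ => l * (t : ℂ)) l t := by
    simpa using (Complex.ofRealCLM.hasDerivAt (x := t)).const_mul l
  simpa [mul_comm] using h1.cexp

theorem scalar_imag {l : ℂ} (hl : l.re = 0) {y f : ℝ → ℂ} (hf : AlmostAutomorphic f)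
    (hy : ∀ t, HasDerivAt y (l * y t + f t) t) {C : ℝ} (hb : ∀ t, ‖y t‖ ≤ C) :
    AlmostAutomorphic y := by
  have hl' : (-l).re = 0 := by simp [hl]
  have h1 : AlmostAutomorphic (fun t : ℝ => Complex.exp (-l * t) * y t) := by
    refine integral_complex (mul (exp_aa hl') hf) (fun t => ?_) (C := C) (fun t => ?_)
    · exact ((hasDerivAt_exp (-l) t).mul (hy t)).congr_deriv (by ring)
    · rw [norm_mul]
      simpa [Complex.norm_exp, hl] using hb t
  have := mul (exp_aa hl) h1
  refine (congrArg AlmostAutomorphic (funext fun t => ?_)).mp this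
  rw [← mul_assoc, ← Complex.exp_add]
  simp

theorem scalar_neg {l : ℂ} (hl : l.re < 0) {y f : ℝ → ℂ} (hf : AlmostAutomorphic f)
    (hy : ∀ t, HasDerivAt y (l * y t + f t) t) {C : ℝ} (hb : ∀ t, ‖y t‖ ≤ C) :
    AlmostAutomorphic y := by
  have hyc : Continuous y := continuous_iff_continuousAt.2 fun t => (hy t).continuousAt
  obtain ⟨D, hD⟩ := bdd hf
  have hfc := hf.1
  have hexpi : IntegrableOn (fun s : ℝ => Real.exp (l.re * s) * D) (Set.Ioi 0) :=
    (integrableOn_exp_mul_Ioi hl 0).mul_const D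
  have hnorm : ∀ s : ℝ, ‖Complex.exp (l * s)‖ = Real.exp (l.re * s) := fun s => by
    simp [Complex.norm_exp]
  have hrep : ∀ t, y t = ∫ s in Set.Ioi (0:ℝ), Complex.exp (l * s) * f (t - s) := by
    intro t
    have hint : IntegrableOn (fun s : ℝ => Complex.exp (l * s) * f (t - s)) (Set.Ioi 0) := by
      refine Integrable.mono' hexpi (by fun_prop) (Eventually.of_forall fun s => ?_)
      rw [norm_mul, hnorm]
      gcongr; exact hD _
    have h1 := intervalIntegral_tendsto_integral_Ioi (0:ℝ) hint tendsto_id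
    have h2 : ∀ r : ℝ, ∫ s in (0:ℝ)..r, Complex.exp (l * s) * f (t - s)
        = y t - Complex.exp (l * r) * y (t - r) := by
      intro r
      have h3 : ∀ s : ℝ, HasDerivAt (fun s : ℝ => - (Complex.exp (l * s) * y (t - s)))
          (Complex.exp (l * s) * f (t - s)) s := by
        intro s
        have h4 : HasDerivAt (fun s : ℝ => y (t - s)) (-(l * y (t - s) + f (t - s))) s := by
          exact ((hy (t - s)).scomp s ((hasDerivAt_id s).const_sub t)).congr_deriv (by simp [add_comm])
        exact ((hasDerivAt_exp l s).mul h4).neg.congr_deriv (by ring)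
      rw [intervalIntegral.integral_eq_sub_of_hasDerivAt (fun x _ => h3 x)
        (Continuous.intervalIntegrable (by fun_prop) _ _)]
      simp
      ring
    have h5 : Tendsto (fun r : ℝ => Complex.exp (l * r) * y (t - r)) atTop (𝓝 0) := by
      have h6 : Tendsto (fun r : ℝ => Real.exp (l.re * r) * C) atTop (𝓝 0) := by
        have := (Real.tendsto_exp_atBot.comp
          (tendsto_id.const_mul_atTop_of_neg hl)).mul_const C
        simpa using this
      refine squeeze_zero_norm (fun r => ?_) h6
      rw [norm_mul, hnorm]
      gcongr; exact hb _
    have h7 : Tendsto (fun r : ℝ => ∫ s in (0:ℝ)..r, Complex.exp (l * s) * f (t - s)) atTop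
        (𝓝 (y t)) := by
      simp_rw [h2]
      simpa using h5.const_sub (y t)
    exact tendsto_nhds_unique h7 h1
  refine ⟨hyc, fun σ => ?_⟩
  obtain ⟨k, hk, ft, h1, h2⟩ := hf.2 σ
  have hftm : Measurable ft := measurable_of_tendsto_metrizable
    (f := fun n t => f (t + σ (k n)))
    (fun n => (hf.1.comp (continuous_id.add continuous_const)).measurable)
    (tendsto_pi_nhds.2 h1)
  have hftb : ∀ t, ‖ft t‖ ≤ D := fun t =>
    le_of_tendsto (h1 t).norm (Eventually.of_forall fun n => hD _)
  refine ⟨k, hk, fun t => ∫ s in Set.Ioi (0:ℝ), Complex.exp (l * s) * ft (t - s),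
    fun t => ?_, fun t => ?_⟩
  · simp_rw [hrep (t + _)]
    refine tendsto_integral_of_dominated_convergence _ (fun n => ?_) hexpi (fun n => ?_) ?_
    · exact Continuous.aestronglyMeasurable (by fun_prop)
    · refine Eventually.of_forall fun s => ?_
      rw [norm_mul, hnorm]
      gcongr; exact hD _
    · refine Eventually.of_forall fun s => Tendsto.const_mul _ ?_
      refine (h1 (t - s)).congr fun n => ?_
      congr 1; ring
  · rw [hrep t]
    refine tendsto_integral_of_dominated_convergence _ (fun n => ?_) hexpi (fun n => ?_) ?_
    · exact Measurable.aestronglyMeasurable (by fun_prop)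
    · refine Eventually.of_forall fun s => ?_
      rw [norm_mul, hnorm]
      gcongr; exact hftb _
    · refine Eventually.of_forall fun s => Tendsto.const_mul _ ?_
      refine (h2 (t - s)).congr fun n => ?_
      congr 1; ring

theorem scalar {l : ℂ} {y f : ℝ → ℂ} (hf : AlmostAutomorphic f)
    (hy : ∀ t, HasDerivAt y (l * y t + f t) t) {C : ℝ} (hb : ∀ t, ‖y t‖ ≤ C) :
    AlmostAutomorphic y := by
  rcases lt_trichotomy l.re 0 with h | h | h
  · exact scalar_neg h hf hy hb
  · exact scalar_imag h hf hy hb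
  · have h1 : AlmostAutomorphic (fun t => y (-t)) := by
      refine scalar_neg (l := -l) (by simpa using h) (comp (reflect hf) continuous_neg)
        (fun t => ?_) (fun t => hb (-t))
      exact ((hy (-t)).scomp t (hasDerivAt_neg t)).congr_deriv (by simp)
    simpa using reflect h1


theorem deriv_clm {E F : Type*} [NormedAddCommGroup E] [NormedSpace ℂ E] [NormedAddCommGroup F]
    [NormedSpace ℂ F] (L : E →L[ℂ] F) {y : ℝ → E} {y' : E} {t : ℝ} (h : HasDerivAt y y' t) :
    HasDerivAt (fun t => L (y t)) (L y') t :=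
  (L.restrictScalars ℝ).hasFDerivAt.comp_hasDerivAt t h

theorem findim (n : ℕ) : ∀ {E : Type*} [NormedAddCommGroup E] [NormedSpace ℂ E]
    [FiniteDimensional ℂ E] (_ : Module.finrank ℂ E = n) (B : E →L[ℂ] E) {y f : ℝ → E}
    (_ : AlmostAutomorphic f) (_ : ∀ t, HasDerivAt y (B (y t) + f t) t)
    (_ : ∃ C, ∀ t, ‖y t‖ ≤ C), AlmostAutomorphic y := by
  induction n using Nat.strong_induction_on with
  | _ n ih =>
  intro E _ _ _ hn B y f hf hy hb
  rcases subsingleton_or_nontrivial E with hE | hE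
  · have : y = fun _ => 0 := funext fun t => Subsingleton.elim _ _
    rw [this]; exact const 0
  obtain ⟨l, hl⟩ := Module.End.exists_eigenvalue (K := ℂ) (V := Module.Dual ℂ E)
    (Module.Dual.transpose (R := ℂ) (B : E →ₗ[ℂ] E))
  obtain ⟨φ₀, hφ, hφ0⟩ := hl.exists_hasEigenvector
  rw [Module.End.mem_eigenspace_iff] at hφ
  let φ : E →L[ℂ] ℂ := LinearMap.toContinuousLinearMap φ₀
  have hφB : ∀ x, φ (B x) = l * φ x := fun x => by
    exact LinearMap.congr_fun hφ x
  obtain ⟨e₀, he₀⟩ : ∃ e, φ₀ e ≠ 0 := by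
    by_contra! h
    exact hφ0 (LinearMap.ext h)
  let e := (φ e₀)⁻¹ • e₀
  have he : φ e = 1 := by
    simp only [e, map_smul, smul_eq_mul]
    exact inv_mul_cancel₀ he₀
  obtain ⟨C, hC⟩ := hb
  -- the scalar component
  have hu : AlmostAutomorphic (fun t => φ (y t)) := by
    refine scalar (l := l) (f := fun t => φ (f t)) (comp hf φ.continuous) (fun t => ?_)
      (C := ‖φ‖ * C) (fun t => ?_)
    · exact (deriv_clm φ (hy t)).congr_deriv (by rw [map_add, hφB])
    · exact (φ.le_opNorm _).trans (by gcongr; exact hC t)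
  let K : Submodule ℂ E := LinearMap.ker φ₀
  have hK : Module.finrank ℂ K < n := by
    rw [← hn]
    refine Submodule.finrank_lt fun h => he₀ ?_
    have : e₀ ∈ K := h ▸ Submodule.mem_top
    exact this
  let p₀ : E →L[ℂ] E := ContinuousLinearMap.id ℂ E - φ.smulRight e
  have hp₀ : ∀ x, p₀ x = x - φ x • e := fun x => by simp [p₀]
  have hp₀K : ∀ x, p₀ x ∈ K := fun x => by
    change φ (p₀ x) = 0
    rw [hp₀, map_sub, map_smul, he]; simp
  let p : E →L[ℂ] K := p₀.codRestrict K hp₀K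
  have hBK : ∀ x : K, (B.comp K.subtypeL) x ∈ K := fun x => by
    change φ (B x) = 0
    rw [hφB]
    have : φ x = 0 := x.2
    rw [this, mul_zero]
  let BK : K →L[ℂ] K := (B.comp K.subtypeL).codRestrict K hBK
  have hpB : ∀ x, p (B x) = BK (p x) + φ x • p (B e) := by
    intro x
    apply Subtype.ext
    change p₀ (B x) = B (p₀ x) + φ x • p₀ (B e)
    simp only [hp₀, map_sub, map_smul, hφB, he]
    module
  have hz : AlmostAutomorphic (fun t => p (y t)) := by
    refine ih _ hK rfl BK (f := fun t => φ (y t) • p (B e) + p (f t)) ?_ (fun t => ?_)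
      ⟨‖p‖ * C, fun t => (p.le_opNorm _).trans (by gcongr; exact hC t)⟩
    · exact add (comp hu (g := fun c : ℂ => c • p (B e)) (by fun_prop)) (comp hf p.continuous)
    · exact (deriv_clm p (hy t)).congr_deriv (by rw [map_add, hpB, add_assoc])
  have := add (comp hz (g := fun x : K => (x : E)) continuous_subtype_val)
    (comp hu (g := fun c : ℂ => c • e) (by fun_prop))
  refine (congrArg AlmostAutomorphic (funext fun t => ?_)).mp this
  change p₀ (y t) + _ = _
  rw [hp₀]; simp

/-- Uniform decay of tails on sequentially relatively compact families. -/
theorem tail_small {V : Type*} [NormedAddCommGroup V] [NormedSpace ℂ V] (Q : ℕ → V →L[ℂ] V)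
    (hQ1 : ∀ N v, ‖Q N v‖ ≤ ‖v‖) (hQ : ∀ v, Tendsto (fun N => Q N v) atTop (𝓝 0))
    (g : ℝ → V) (hg : ∀ σ : ℕ → ℝ, ∃ k : ℕ → ℕ, StrictMono k ∧ ∃ v,
      Tendsto (fun n => g (σ (k n))) atTop (𝓝 v)) {ε : ℝ} (hε : 0 < ε) :
    ∃ N₀, ∀ N ≥ N₀, ∀ t, ‖Q N (g t)‖ < ε := by
  by_contra! hc
  choose M hM σ hσ using hc
  obtain ⟨k, hk, v, hv⟩ := hg σ
  have hMt : Tendsto (fun n => M (k n)) atTop atTop :=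
    (tendsto_atTop_mono hM tendsto_id).comp hk.tendsto_atTop
  have h1 : Tendsto (fun n => ‖g (σ (k n)) - v‖ + ‖Q (M (k n)) v‖) atTop (𝓝 0) := by
    have h2 : Tendsto (fun n => ‖g (σ (k n)) - v‖) atTop (𝓝 0) := by
      simpa using (hv.sub_const v).norm
    have h3 := ((hQ v).comp hMt).norm
    simpa using h2.add h3
  obtain ⟨n, hn⟩ := (h1.eventually_lt_const hε).exists
  have h4 : Q (M (k n)) (g (σ (k n))) = Q (M (k n)) (g (σ (k n)) - v) + Q (M (k n)) v := by
    rw [map_sub]; abel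
  have h5 := hσ (k n)
  rw [h4] at h5
  have := norm_add_le (Q (M (k n)) (g (σ (k n)) - v)) (Q (M (k n)) v)
  have := hQ1 (M (k n)) (g (σ (k n)) - v)
  linarith

theorem main {V : Type*} [NormedAddCommGroup V] [InnerProductSpace ℂ V] [CompleteSpace V]
    (A : V →L[ℂ] V) (hA : IsCompactOperator A)
    (U : ℕ → Submodule ℂ V) [∀ N, FiniteDimensional ℂ (U N)] (hU : Monotone U)
    (hUd : ⊤ ≤ (⨆ N, U N).topologicalClosure)
    (hUA : ∀ N, ∀ v ∈ U N, A v ∈ U N) (hUA' : ∀ N, ∀ v ∈ (U N)ᗮ, A v ∈ (U N)ᗮ)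
    (f : ℝ → V) (hf : AlmostAutomorphic f) (y : ℝ → V)
    (hy : ∀ t : ℝ, HasDerivAt y (A (y t) + f t) t) (hyb : ∃ C, ∀ t : ℝ, ‖y t‖ ≤ C) :
    AlmostAutomorphic y := by
  obtain ⟨C, hC⟩ := hyb
  have hyc : Continuous y := continuous_iff_continuousAt.2 fun t => (hy t).continuousAt
  -- finite dimensional pieces
  have hS : ∀ N, AlmostAutomorphic (fun t => (U N).starProjection (y t)) := by
    intro N
    let p := (U N).orthogonalProjectionOnto
    let B : U N →L[ℂ] U N := (A.comp (U N).subtypeL).codRestrict (U N) (fun x => hUA N _ x.2)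
    have hpA : ∀ x, p (A x) = B (p x) := by
      intro x
      apply Subtype.ext
      change (U N).starProjection (A x) = A ((U N).starProjection x)
      refine Submodule.eq_starProjection_of_mem_of_inner_eq_zero
        (hUA N _ (Submodule.starProjection_apply_mem _ _)) ?_ 
      have h := hUA' N _ ((U N).sub_starProjection_mem_orthogonal x)
      rw [map_sub] at h
      intro w hw
      exact Submodule.inner_left_of_mem_orthogonal hw h
    have hz : AlmostAutomorphic (fun t => p (y t)) := by
      refine findim _ rfl B (f := fun t => p (f t)) (comp hf p.continuous) (fun t => ?_)
        ⟨‖p‖ * C, fun t => (p.le_opNorm _).trans (by gcongr; exact hC t)⟩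
      exact (deriv_clm p (hy t)).congr_deriv (by rw [map_add, hpA])
    exact comp hz (g := fun x : U N => (x : V)) continuous_subtype_val
  let Q : ℕ → V →L[ℂ] V := fun N => (U N)ᗮ.starProjection
  have hQe : ∀ N v, Q N v = v - (U N).starProjection v := fun N v =>
    Submodule.starProjection_orthogonal_val v
  have hQ1 : ∀ N v, ‖Q N v‖ ≤ ‖v‖ := fun N v => Submodule.norm_starProjection_apply_le _ v
  have hQ0 : ∀ v, Tendsto (fun N => Q N v) atTop (𝓝 0) := by
    intro v
    simp_rw [hQe]
    simpa using (Submodule.starProjection_tendsto_self U hU v hUd).const_sub v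
  have hQm : ∀ N N' v, N ≤ N' → ‖Q N' v‖ ≤ ‖Q N v‖ := by
    intro N N' v h
    have h1 : Q N' (Q N v) = Q N' v :=
      congrArg (fun L : V →L[ℂ] V => L v) (Submodule.starProjection_comp_starProjection_of_le
        (Submodule.orthogonal_le (hU h)))
    rw [← h1]; exact hQ1 _ _
  have hpyth : ∀ N v, ‖v‖ ^ 2 = ‖(U N).starProjection v‖ ^ 2 + ‖Q N v‖ ^ 2 := fun N v =>
    Submodule.norm_sq_eq_add_norm_sq_starProjection v (U N)
  -- derivative has relatively compact range
  have hd : ∀ σ : ℕ → ℝ, ∃ k : ℕ → ℕ, StrictMono k ∧ ∃ v,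
      Tendsto (fun n => A (y (σ (k n))) + f (σ (k n))) atTop (𝓝 v) := by
    intro σ
    obtain ⟨k, hk, ft, h1, -⟩ := hf.2 σ
    obtain ⟨K, hK, hKs⟩ := IsCompactOperator.image_closedBall_subset_compact
      (f := (A : V →ₗ[ℂ] V)) hA C
    obtain ⟨a, -, j, hj, ha⟩ := hK.tendsto_subseq (x := fun n => A (y (σ (k n))))
      (fun n => hKs ⟨_, by simpa using hC _, rfl⟩)
    have h2 := (h1 0).comp hj.tendsto_atTop
    simp only [zero_add] at h2
    exact ⟨k ∘ j, hk.comp hj, _, ha.add h2⟩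
  have htail : ∀ δ > 0, ∃ N, ∀ t, ‖Q N (y t)‖ < δ := by
    intro δ hδ
    by_contra! hc
    have hbd : BddAbove (Set.range fun t => ‖y t‖ ^ 2) := ⟨C ^ 2, by
      rintro _ ⟨t, rfl⟩
      exact pow_le_pow_left₀ (norm_nonneg _) (hC t) 2⟩
    set M := ⨆ t, ‖y t‖ ^ 2 with hM
    have hle : ∀ t, ‖y t‖ ^ 2 ≤ M := fun t => le_ciSup hbd t
    obtain ⟨t₀, ht₀⟩ := exists_lt_of_lt_ciSup (show M - (δ/2)^2 < M by
      have : 0 < (δ/2)^2 := by positivity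
      linarith)
    have h1 : Tendsto (fun N => ‖(U N).starProjection (y t₀)‖ ^ 2) atTop (𝓝 (‖y t₀‖ ^ 2)) :=
      (Submodule.starProjection_tendsto_self U hU (y t₀) hUd).norm.pow 2
    obtain ⟨N, hN⟩ := (h1.eventually_const_lt ht₀).exists
    obtain ⟨L, hL⟩ := recur (hS N) (t₀ := t₀) (U := {v : V | M - (δ/2)^2 < ‖v‖ ^ 2})
      (isOpen_lt continuous_const (by fun_prop)) (by exact hN)
    have hL0 : 0 ≤ L := by
      obtain ⟨t, ht, -⟩ := hL 0
      exact (abs_nonneg _).trans ht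
    obtain ⟨N₀, hN₀⟩ := tail_small Q hQ1 hQ0 (fun t => A (y t) + f t) hd (ε := δ / 2 / (L + 1)) (by positivity)
    let N' := max N N₀
    obtain ⟨t₁, ht₁⟩ := hc N'
    obtain ⟨t, ht, htU⟩ := hL t₁
    have h2 : ‖Q N' (y t) - Q N' (y t₁)‖ ≤ δ / 2 / (L + 1) * ‖t - t₁‖ :=
      convex_univ.norm_image_sub_le_of_norm_hasDerivWithin_le
        (f := fun t => Q N' (y t))
        (fun x _ => (deriv_clm (Q N') (hy x)).hasDerivWithinAt)
        (fun x _ => (hN₀ N' (le_max_right _ _) x).le) (Set.mem_univ _) (Set.mem_univ _)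
    have h3 : δ / 2 / (L + 1) * ‖t - t₁‖ ≤ δ / 2 := by
      calc δ / 2 / (L + 1) * ‖t - t₁‖ ≤ δ / 2 / (L + 1) * (L + 1) := by
            gcongr
            exact (show |t - t₁| ≤ L + 1 by linarith)
        _ = δ / 2 := by field_simp
    have h4 : ‖Q N' (y t₁)‖ ≤ ‖Q N' (y t)‖ + ‖Q N' (y t) - Q N' (y t₁)‖ := by
      have := norm_sub_norm_le (Q N' (y t₁)) (Q N' (y t))
      rw [norm_sub_rev] at this
      linarith
    have h5 : δ / 2 ≤ ‖Q N (y t)‖ := by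
      have := hQm N N' (y t) (le_max_left _ _)
      linarith
    have h6 : (δ/2)^2 ≤ ‖Q N (y t)‖^2 := pow_le_pow_left₀ (by positivity) h5 2
    have h7 := hpyth N (y t)
    have h8 := hle t
    have h9 : M - (δ/2)^2 < ‖(U N).starProjection (y t)‖ ^ 2 := htU
    linarith
  refine unif hyc _ hS ?_
  rw [Metric.tendstoUniformly_iff]
  intro ε hε
  obtain ⟨N, hN⟩ := htail ε hε
  filter_upwards [eventually_ge_atTop N] with N' hN' t
  rw [dist_eq_norm, ← hQe]
  exact (hQm N N' _ hN').trans_lt (hN t)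

end AAux

theorem compact_operator_hilbert_sum_bounded_solutions_almost_automorphic
    {V : Type*} [NormedAddCommGroup V] [InnerProductSpace ℂ V] [CompleteSpace V]
    (A : V →L[ℂ] V) (hA : IsCompactOperator A)
    (W : ℕ → Submodule ℂ V)
    (hWfin : ∀ k, FiniteDimensional ℂ (W k))
    (hWclosed : ∀ k, IsClosed (W k : Set V))
    (hWorth : ∀ k l, k ≠ l → W k ≤ (W l)ᗮ)
    (hWdense : (⨆ k, W k).topologicalClosure = ⊤)
    (P : ℕ → V →L[ℂ] V)
    (hPproj : ∀ (k : ℕ) (v : V), P k v ∈ W k ∧ v - P k v ∈ (W k)ᗮ)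
    (hPA : ∀ k : ℕ, A.comp (P k) = (P k).comp A)
    (f : ℝ → V) (hfc : Continuous f) (hfb : ∃ C, ∀ t, ‖f t‖ ≤ C)
    (hfaa : AlmostAutomorphic f)
    (y : ℝ → V)
    (hy : ∀ t : ℝ, HasDerivAt y (A (y t) + f t) t)
    (hyb : ∃ C, ∀ t : ℝ, ‖y t‖ ≤ C) :
    AlmostAutomorphic y := by

  have hPself : ∀ k, ∀ w ∈ W k, P k w = w := by
    intro k w hw
    have h1 : w - P k w ∈ W k := (W k).sub_mem hw (hPproj k w).1
    have h2 := Submodule.inner_right_of_mem_orthogonal h1 (hPproj k w).2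
    exact (sub_eq_zero.1 (inner_self_eq_zero.1 h2)).symm
  have hPker : ∀ k v, v ∈ (W k)ᗮ ↔ P k v = 0 := by
    intro k v
    constructor
    · intro hv
      have h1 : P k v ∈ (W k)ᗮ := by
        have := (W k)ᗮ.sub_mem hv (hPproj k v).2
        simpa using this
      exact inner_self_eq_zero.1 (Submodule.inner_right_of_mem_orthogonal (hPproj k v).1 h1)
    · intro hv
      have := (hPproj k v).2
      rwa [hv, sub_zero] at this
  have hcomm : ∀ k v, A (P k v) = P k (A v) := fun k v =>
    congrArg (fun L : V →L[ℂ] V => L v) (hPA k)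
  let U : ℕ → Submodule ℂ V := fun N => ⨆ k ∈ Finset.range N, W k
  have hUfin : ∀ N, FiniteDimensional ℂ (U N) := fun N => by
    have := hWfin
    exact Submodule.finiteDimensional_finset_sup (Finset.range N) W |> fun h => by
      rwa [Finset.sup_eq_iSup] at h
  have hWU : ∀ k N, k < N → W k ≤ U N := fun k N h =>
    le_iSup₂_of_le k (Finset.mem_range.2 h) le_rfl
  refine AAux.main A hA U ?_ ?_ ?_ ?_ f hfaa y hy hyb
  · intro N N' h
    exact iSup₂_le fun k hk => hWU k N' ((Finset.mem_range.1 hk).trans_le h)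
  · rw [← hWdense]
    refine Submodule.topologicalClosure_mono (iSup_le fun k => ?_)
    exact (hWU k (k+1) k.lt_succ_self).trans (le_iSup U (k+1))
  · intro N
    have : U N ≤ (U N).comap (A : V →ₗ[ℂ] V) := iSup₂_le fun k hk w hw => by
      refine hWU k N (Finset.mem_range.1 hk) ?_
      have h := hcomm k w
      rw [hPself k w hw] at h
      change A w ∈ W k
      rw [h]; exact (hPproj k _).1
    exact fun v hv => this hv
  · intro N v hv
    have h1 : U N ≤ (ℂ ∙ A v)ᗮ := iSup₂_le fun k hk => by
      have h : v ∈ (W k)ᗮ := Submodule.orthogonal_le (hWU k N (Finset.mem_range.1 hk)) hv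
      have h2 : A v ∈ (W k)ᗮ := by
        rw [hPker] at h ⊢
        rw [← hcomm, h, map_zero]
      intro w hw
      rw [Submodule.mem_orthogonal_singleton_iff_inner_left]
      exact Submodule.inner_right_of_mem_orthogonal hw h2
    rw [Submodule.mem_orthogonal]
    intro u hu
    exact (Submodule.mem_orthogonal_singleton_iff_inner_left).1 (h1 hu)
end

section
/- Let V be a complex Banach space and let A : ℝ → Matrix (Fin p) (Fin p) ℂ be bounded and continuous with every entry almost automorphic, with fundamental matrix Φ_A, and suppose y' = A(t)y has an α-exponential dichotomy with constants c, α > 0 whose projection P commutes with Φ_A(t) for every t. Let ρ > 0, let f : ℝ → (Fin p → V) be bounded, continuous and almost automorphic with sup_{t} ‖f(t)‖ ≤ αρ/(2c), and set φ₀(t) = ∫_ℝ G_A(t,s)·f(s) ds. Let g : ℝ × (Fin p → V) → (Fin p → V) be continuous with g(t,0) = 0 for all t, almost automorphic in t uniformly for y in compact sets, and suppose there is L > 0 with ‖g(t,y₁) − g(t,y₂)‖ ≤ L·‖y₁ − y₂‖ for all t ∈ ℝ and all y₁, y₂ at distance at most ρ from φ₀(t). If 4cL < α, then there exists a unique almost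 automorphic differentiable y : ℝ → (Fin p → V) with sup_{t} ‖y(t) − φ₀(t)‖ ≤ ρ solving y'(t) = A(t)·y(t) + f(t) + g(t, y(t)) for all t ∈ ℝ. -/
open MeasureTheory Filter Topology

attribute [local instance] Matrix.linftyOpNormedAddCommGroup Matrix.linftyOpNormedRing
  Matrix.linftyOpNormedAlgebra

/-- `g(t,y)` is almost automorphic in `t` uniformly for `y` in compact subsets of `W`. -/
def AlmostAutomorphicUniform {W : Type*} [NormedAddCommGroup W] (g : ℝ → W → W) : Prop :=
  ∀ K : Set W, IsCompact K → ∀ σ : ℕ → ℝ, ∃ k : ℕ → ℕ, StrictMono k ∧ ∃ gt : ℝ → W → W,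
    (∀ t : ℝ, TendstoUniformlyOn (fun n y => g (t + σ (k n)) y) (gt t) atTop K) ∧
    (∀ t : ℝ, TendstoUniformlyOn (fun n y => gt (t - σ (k n)) y) (g t) atTop K)

/-- The action of a complex `p × p` matrix on vectors with entries in a complex vector space. -/
def matSMulVec {V : Type*} [AddCommGroup V] [Module ℂ V] {p : ℕ}
    (M : Matrix (Fin p) (Fin p) ℂ) (v : Fin p → V) : Fin p → V :=
  fun i => ∑ j : Fin p, M i j • v j

/-- The bounded solution `φ₀` of the linear inhomogeneous equation, given by the Green matrix. -/
noncomputable def greenSol {V : Type*} [NormedAddCommGroup V] [NormedSpace ℂ V]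
    [CompleteSpace V] {p : ℕ} (Φ : ℝ → Matrix (Fin p) (Fin p) ℂ)
    (P : Matrix (Fin p) (Fin p) ℂ) (f : ℝ → (Fin p → V)) (t : ℝ) : Fin p → V :=
  ∫ s : ℝ, matSMulVec (GreenMat Φ P t s) (f s)


/-- `ψ` converges along the shifts `τ` to `ψt`, and back. -/
def AAlong {V : Type*} [TopologicalSpace V] (τ : ℕ → ℝ) (ψ ψt : ℝ → V) : Prop :=
  (∀ t : ℝ, Tendsto (fun n => ψ (t + τ n)) atTop (𝓝 (ψt t))) ∧
    (∀ t : ℝ, Tendsto (fun n => ψt (t - τ n)) atTop (𝓝 (ψ t)))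

theorem AAlong.sub {V : Type*} [TopologicalSpace V] {τ τ' : ℕ → ℝ} {ψ ψt : ℝ → V}
    (h : AAlong τ ψ ψt) {e : ℕ → ℕ} (he : Tendsto e atTop atTop)
    (hτ : ∀ᶠ n in atTop, τ' n = τ (e n)) : AAlong τ' ψ ψt := by
  constructor
  · intro t
    refine ((h.1 t).comp he).congr' ?_
    filter_upwards [hτ] with n hn
    simp [hn]
  · intro t
    refine ((h.2 t).comp he).congr' ?_
    filter_upwards [hτ] with n hn
    simp [hn]

theorem exists_diag (Q : ℕ → (ℕ → ℝ) → Prop)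
    (hmono : ∀ m τ τ' (e : ℕ → ℕ), Q m τ → Tendsto e atTop atTop →
      (∀ᶠ n in atTop, τ' n = τ (e n)) → Q m τ')
    (hex : ∀ m (τ : ℕ → ℝ), ∃ k : ℕ → ℕ, StrictMono k ∧ Q m (fun n => τ (k n)))
    (σ : ℕ → ℝ) : ∃ k : ℕ → ℕ, StrictMono k ∧ ∀ m, Q m (fun n => σ (k n)) := by
  choose J hJ hQ using hex
  let K : ℕ → ℕ → ℕ := fun m => Nat.rec id (fun m Km => fun n => Km (J m (fun n => σ (Km n)) n)) m
  have hKs : ∀ m n, K (m+1) n = K m (J m (fun n => σ (K m n)) n) := fun m n => rfl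
  have hK : ∀ m, StrictMono (K m) := by
    intro m
    induction m with
    | zero => exact strictMono_id
    | succ m ih =>
      intro a b hab
      rw [hKs, hKs]
      exact ih (hJ _ _ hab)
  have hfac : ∀ m d, ∃ e : ℕ → ℕ, StrictMono e ∧ ∀ n, K (m + d) n = K m (e n) := by
    intro m d
    induction d with
    | zero => exact ⟨id, strictMono_id, fun n => rfl⟩
    | succ d ih =>
      obtain ⟨e, he, h⟩ := ih
      refine ⟨fun n => e (J (m+d) (fun n => σ (K (m+d) n)) n), he.comp (hJ _ _), fun n => ?_⟩
      rw [← add_assoc, hKs, h]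
  refine ⟨fun n => K n n, strictMono_nat_of_lt_succ fun n => ?_, fun m => ?_⟩
  · rw [hKs]
    refine (hK n) (lt_of_lt_of_le (Nat.lt_succ_self n) ?_)
    exact (hJ _ _).le_apply
  · choose e he hKe using hfac (m+1)
    refine hmono m (fun n => σ (K (m+1) n)) _ (fun n => e (n - (m+1)) n) (hQ m (fun n => σ (K m n))) ?_ ?_
    · exact tendsto_atTop_mono (fun n => (he _).le_apply) tendsto_id
    · filter_upwards [eventually_ge_atTop (m+1)] with n hn
      rw [← hKe]
      congr 2
      omega

theorem almostAutomorphic_iff {V : Type*} [NormedAddCommGroup V] {ψ : ℝ → V} :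
    AlmostAutomorphic ψ ↔ Continuous ψ ∧ ∀ σ : ℕ → ℝ, ∃ k : ℕ → ℕ, StrictMono k ∧
      ∃ ψt, AAlong (fun n => σ (k n)) ψ ψt := Iff.rfl

theorem AlmostAutomorphic.family {ι V : Type*} [NormedAddCommGroup V] [Encodable ι]
    {ψ : ι → ℝ → V} (h : ∀ i, AlmostAutomorphic (ψ i)) (σ : ℕ → ℝ) :
    ∃ k : ℕ → ℕ, StrictMono k ∧ ∀ i, ∃ ψt, AAlong (fun n => σ (k n)) (ψ i) ψt := by
  obtain ⟨k, hk, hQ⟩ := exists_diag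
    (fun m τ => ∀ i, Encodable.encode i = m → ∃ ψt, AAlong τ (ψ i) ψt)
    (fun m τ τ' e hq he hτ i hi => by
      obtain ⟨ψt, hψ⟩ := hq i hi
      exact ⟨ψt, hψ.sub he hτ⟩)
    (fun m τ => by
      by_cases hm : ∃ i : ι, Encodable.encode i = m
      · obtain ⟨i, hi⟩ := hm
        obtain ⟨k, hk, hkk⟩ := (h i).2 τ
        refine ⟨k, hk, fun i' hi' => ?_⟩
        have : i' = i := Encodable.encode_injective (hi'.trans hi.symm)
        subst this
        exact hkk
      · exact ⟨id, strictMono_id, fun i hi => (hm ⟨i, hi⟩).elim⟩) σ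
  exact ⟨k, hk, fun i => hQ _ i rfl⟩

theorem AlmostAutomorphic.pair {V W : Type*} [NormedAddCommGroup V] [NormedAddCommGroup W]
    {ψ : ℝ → V} {χ : ℝ → W} (h : AlmostAutomorphic ψ) (h' : AlmostAutomorphic χ) (σ : ℕ → ℝ) :
    ∃ k : ℕ → ℕ, StrictMono k ∧ (∃ ψt, AAlong (fun n => σ (k n)) ψ ψt) ∧
      ∃ χt, AAlong (fun n => σ (k n)) χ χt := by
  obtain ⟨k, hk, ψt, hψ⟩ := h.2 σ
  obtain ⟨l, hl, χt, hχ⟩ := h'.2 (fun n => σ (k n))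
  exact ⟨fun n => k (l n), hk.comp hl,
    ⟨ψt, AAlong.sub hψ hl.tendsto_atTop (Eventually.of_forall fun n => rfl)⟩, χt, hχ⟩

theorem AlmostAutomorphic.add {V : Type*} [NormedAddCommGroup V]
    {ψ χ : ℝ → V} (h : AlmostAutomorphic ψ) (h' : AlmostAutomorphic χ) :
    AlmostAutomorphic (fun t => ψ t + χ t) := by
  refine ⟨h.1.add h'.1, fun σ => ?_⟩
  obtain ⟨k, hk, ⟨ψt, h1⟩, χt, h2⟩ := h.pair h' σ
  exact ⟨k, hk, fun t => ψt t + χt t, fun t => (h1.1 t).add (h2.1 t),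
    fun t => (h1.2 t).add (h2.2 t)⟩

theorem AlmostAutomorphic.compact {V : Type*} [NormedAddCommGroup V] {ψ : ℝ → V}
    (h : AlmostAutomorphic ψ) : IsCompact (closure (Set.range ψ)) := by
  rw [isCompact_iff_isSeqCompact]
  intro x hx
  have : ∀ n : ℕ, ∃ t : ℝ, dist (x n) (ψ t) < 1 / ((n : ℝ) + 1) := by
    intro n
    obtain ⟨_, ⟨t, rfl⟩, ht⟩ := Metric.mem_closure_iff.1 (hx n) (1 / ((n : ℝ) + 1)) (by positivity)
    exact ⟨t, ht⟩
  choose T hT using this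
  obtain ⟨k, hk, ψt, h1, -⟩ := h.2 T
  have h0 := h1 0
  simp only [zero_add] at h0
  refine ⟨ψt 0, ?_, k, hk, ?_⟩
  · exact isClosed_closure.mem_of_tendsto h0
      (Eventually.of_forall fun n => subset_closure ⟨_, rfl⟩)
  · have hd : Tendsto (fun n => dist (ψ (T (k n))) (x (k n))) atTop (𝓝 0) := by
      refine squeeze_zero (fun _ => dist_nonneg) (fun n => ?_)
        (tendsto_one_div_add_atTop_nhds_zero_nat.comp hk.tendsto_atTop)
      rw [dist_comm]
      exact (hT _).le
    exact h0.congr_dist hd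

theorem AlmostAutomorphic.bounded {V : Type*} [NormedAddCommGroup V] {ψ : ℝ → V}
    (h : AlmostAutomorphic ψ) : ∃ M, 0 ≤ M ∧ ∀ t, ‖ψ t‖ ≤ M := by
  obtain ⟨M, hM⟩ := h.compact.isBounded.exists_norm_le
  refine ⟨M, (norm_nonneg _).trans (hM (ψ 0) (subset_closure ⟨_, rfl⟩)), fun t => hM _ (subset_closure ⟨_, rfl⟩)⟩

theorem AlmostAutomorphic.compose {W : Type*} [NormedAddCommGroup W] {g : ℝ → W → W}
    (hgc : Continuous fun q : ℝ × W => g q.1 q.2) (hg : AlmostAutomorphicUniform g)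
    {y : ℝ → W} (hy : AlmostAutomorphic y) : AlmostAutomorphic (fun t => g t (y t)) := by
  refine ⟨hgc.comp (continuous_id.prodMk hy.1), fun σ => ?_⟩
  set K := closure (Set.range y) with hK
  have hyK : ∀ t, y t ∈ K := fun t => subset_closure ⟨t, rfl⟩
  obtain ⟨k, hk, yt, hyt⟩ := hy.2 σ
  obtain ⟨l, hl, gt, hg1, hg2⟩ := hg K hy.compact (fun n => σ (k n))
  replace hyt : AAlong (fun n => σ (k (l n))) y yt :=
    AAlong.sub hyt hl.tendsto_atTop (Eventually.of_forall fun n => rfl)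
  have hytK : ∀ t, yt t ∈ K := fun t =>
    isClosed_closure.mem_of_tendsto (hyt.1 t) (Eventually.of_forall fun n => hyK _)
  have hgcont : ∀ t, Continuous (g t) := fun t => hgc.comp (continuous_const.prodMk continuous_id)
  refine ⟨fun n => k (l n), hk.comp hl, fun t => gt t (yt t), fun t => ?_, fun t => ?_⟩
  · have hgtc : ContinuousOn (gt t) K :=
      (hg1 t).continuousOn (Frequently.of_forall fun n => (hgcont _).continuousOn)
    refine (hg1 t).tendsto_comp (hgtc _ (hytK t)) ?_
    exact tendsto_nhdsWithin_iff.2 ⟨hyt.1 t, Eventually.of_forall fun n => hyK _⟩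
  · refine (hg2 t).tendsto_comp ((hgcont t).continuousOn _ (hyK t)) ?_
    exact tendsto_nhdsWithin_iff.2 ⟨hyt.2 t, Eventually.of_forall fun n => hytK _⟩

theorem almostAutomorphic_of_uniform {V : Type*} [NormedAddCommGroup V] [CompleteSpace V]
    {ψ : ℝ → V} (hc : Continuous ψ)
    (h : ∀ ε > 0, ∃ χ : ℝ → V, AlmostAutomorphic χ ∧ ∀ t, ‖χ t - ψ t‖ ≤ ε) :
    AlmostAutomorphic ψ := by
  refine ⟨hc, fun σ => ?_⟩
  have h' : ∀ m : ℕ, ∃ χ : ℝ → V, AlmostAutomorphic χ ∧ ∀ t, ‖χ t - ψ t‖ ≤ 1 / ((m : ℝ) + 1) :=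
    fun m => h _ (by positivity)
  choose χ hχ hχψ using h'
  obtain ⟨k, hk, hkk⟩ := AlmostAutomorphic.family hχ σ
  choose χt hχt using hkk
  have hε : ∀ ε > 0, ∃ m : ℕ, 1 / ((m : ℝ) + 1) < ε := fun ε hε => exists_nat_one_div_lt hε
  have hcau : ∀ t, CauchySeq (fun n => ψ (t + σ (k n))) := by
    intro t
    rw [Metric.cauchySeq_iff]
    intro ε he
    obtain ⟨m, hm⟩ := hε (ε / 3) (by positivity)
    obtain ⟨N, hN⟩ := Metric.cauchySeq_iff.1 ((hχt m).1 t).cauchySeq (ε / 3) (by positivity)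
    refine ⟨N, fun a ha b hb => ?_⟩
    have h1 := hN a ha b hb
    have h2 := hχψ m (t + σ (k a))
    have h3 := hχψ m (t + σ (k b))
    rw [← dist_eq_norm] at h2 h3
    have h4 := dist_triangle4_left (χ m (t + σ (k a))) (χ m (t + σ (k b))) (ψ (t + σ (k a)))
      (ψ (t + σ (k b)))
    simp only at h1
    linarith
  choose ψt hψt using fun t => cauchySeq_tendsto_of_complete (hcau t)
  refine ⟨k, hk, ψt, hψt, fun t => ?_⟩
  have hb : ∀ m t, dist (χt m t) (ψt t) ≤ 1 / ((m : ℝ) + 1) := by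
    intro m t
    refine le_of_tendsto (((hχt m).1 t).dist (hψt t)) (Eventually.of_forall fun n => ?_)
    rw [dist_eq_norm]
    exact hχψ _ _
  rw [Metric.tendsto_atTop]
  intro ε he
  obtain ⟨m, hm⟩ := hε (ε / 3) (by positivity)
  obtain ⟨N, hN⟩ := Metric.tendsto_atTop.1 ((hχt m).2 t) (ε / 3) (by positivity)
  refine ⟨N, fun n hn => ?_⟩
  have h1 := hN n hn
  have h2 := hb m (t - σ (k n))
  have h3 := hχψ m t
  rw [← dist_eq_norm] at h3
  have h4 := dist_triangle4_left (χt m (t - σ (k n))) (χ m t) (ψt (t - σ (k n))) (ψ t)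
  simp only at h1
  linarith

section AbstractGreen

set_option linter.unusedSectionVars false

/-- Abstract data of an exponential dichotomy in a normed ring. -/
structure Dich {R : Type*} [NormedRing R] [NormedAlgebra ℝ R]
    (A Φ Θ : ℝ → R) (P : R) (c α : ℝ) : Prop where
  hA : Continuous A
  hAb : ∃ C, ∀ t, ‖A t‖ ≤ C
  dΦ : ∀ t, HasDerivAt Φ (A t * Φ t) t
  dΘ : ∀ t, HasDerivAt Θ (-(Θ t * A t)) t
  ΦΘ : ∀ t, Φ t * Θ t = 1
  ΘΦ : ∀ t, Θ t * Φ t = 1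
  hP : P * P = P
  commΦ : ∀ t, Φ t * P = P * Φ t
  commΘ : ∀ t, Θ t * P = P * Θ t
  hc : 0 < c
  hα : 0 < α
  bd : ∀ t s : ℝ, ‖(if s ≤ t then Φ t * Θ s * P else -(Φ t * Θ s * (1 - P)))‖ ≤
    c * Real.exp (-α * |t - s|)

/-- Abstract Green function. -/
noncomputable def gG {R : Type*} [NormedRing R] (Φ Θ : ℝ → R) (P : R) (t s : ℝ) : R :=
  if s ≤ t then Φ t * Θ s * P else -(Φ t * Θ s * (1 - P))

variable {R : Type*} [NormedRing R] [NormedAlgebra ℝ R] [CompleteSpace R]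
  {A Φ Θ : ℝ → R} {P : R} {c α : ℝ}

theorem Dich.norm_le (D : Dich A Φ Θ P c α) (t s : ℝ) :
    ‖gG Φ Θ P t s‖ ≤ c * Real.exp (-α * |t - s|) := D.bd t s

theorem Dich.norm_le_c (D : Dich A Φ Θ P c α) (t s : ℝ) : ‖gG Φ Θ P t s‖ ≤ c := by
  refine (D.norm_le t s).trans ?_
  have : Real.exp (-α * |t - s|) ≤ 1 := by
    rw [Real.exp_le_one_iff]
    have := mul_nonneg D.hα.le (abs_nonneg (t - s))
    linarith
  have := D.hc
  nlinarith

theorem Dich.cΦ (D : Dich A Φ Θ P c α) : Continuous Φ :=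
  continuous_iff_continuousAt.2 fun t => (D.dΦ t).continuousAt

theorem Dich.cΘ (D : Dich A Φ Θ P c α) : Continuous Θ :=
  continuous_iff_continuousAt.2 fun t => (D.dΘ t).continuousAt

theorem Dich.diff_core (D : Dich A Φ Θ P c α) {Q : R} (hQ : Q * Q = Q)
    (hQΦ : ∀ t, Φ t * Q = Q * Φ t) (hQΘ : ∀ t, Θ t * Q = Q * Θ t) (t s a b : ℝ)
    (hb : ∀ᵐ r : ℝ, r ∈ Set.uIoc s t →
      ‖Φ (t + a) * Θ (r + a) * Q‖ ≤ c ∧ ‖Φ (r + b) * Θ (s + b) * Q‖ ≤ c) :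
    ‖Φ (t + a) * Θ (s + a) * Q - Φ (t + b) * Θ (s + b) * Q‖ ≤
      c ^ 2 * |∫ r in s..t, ‖A (r + a) - A (r + b)‖| := by
  have hA := D.hA
  have hΦ := D.cΦ
  have hΘ := D.cΘ
  have hc := D.hc
  have hQ2 : ∀ x y, Φ x * Θ y * Q = Q * (Φ x * Θ y) := by
    intro x y
    rw [mul_assoc, hQΘ, ← mul_assoc, hQΦ, mul_assoc]
  set F : ℝ → R := fun r =>
    (Q * Φ (t + a)) * (Θ (r + a) * Φ (r + b)) * (Θ (s + b) * Q) with hF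
  set E : ℝ → R := fun r =>
    (Q * Φ (t + a)) * (-(Θ (r + a) * A (r + a)) * Φ (r + b) +
      Θ (r + a) * (A (r + b) * Φ (r + b))) * (Θ (s + b) * Q) with hE
  have hder : ∀ r, HasDerivAt F (E r) r := by
    intro r
    have h1 : HasDerivAt (fun r => Θ (r + a)) (-(Θ (r + a) * A (r + a))) r :=
      (D.dΘ (r + a)).comp_add_const r a
    have h2 : HasDerivAt (fun r => Φ (r + b)) (A (r + b) * Φ (r + b)) r :=
      (D.dΦ (r + b)).comp_add_const r b
    exact ((h1.mul h2).const_mul _).mul_const _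
  have hEc : Continuous E := by fun_prop
  have hint := intervalIntegral.integral_eq_sub_of_hasDerivAt (fun r _ => hder r)
    (hEc.intervalIntegrable s t)
  have hFt : F t = Φ (t + b) * Θ (s + b) * Q := by
    calc F t = Q * ((Φ (t + a) * Θ (t + a)) * (Φ (t + b) * Θ (s + b) * Q)) := by
            simp only [hF, mul_assoc]
      _ = Φ (t + b) * Θ (s + b) * Q := by
            rw [D.ΦΘ, one_mul, hQ2, ← mul_assoc Q Q, hQ]
  have hFs : F s = Φ (t + a) * Θ (s + a) * Q := by
    calc F s = Q * (Φ (t + a) * Θ (s + a) * ((Φ (s + b) * Θ (s + b)) * Q)) := by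
            simp only [hF, mul_assoc]
      _ = Φ (t + a) * Θ (s + a) * Q := by
            rw [D.ΦΘ, one_mul, hQ2, ← mul_assoc Q Q, hQ]
  rw [hFt, hFs] at hint
  rw [norm_sub_rev, ← hint]
  have hE2 : ∀ r, E r = (Φ (t + a) * Θ (r + a) * Q) * (A (r + b) - A (r + a)) *
      (Φ (r + b) * Θ (s + b) * Q) := by
    intro r
    rw [hQ2 (t + a)]
    simp only [hE]
    noncomm_ring
  have hbd : ∀ᵐ r : ℝ ∂(volume.restrict (Set.uIoc s t)),
      ‖E r‖ ≤ c ^ 2 * ‖A (r + a) - A (r + b)‖ := by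
    rw [ae_restrict_iff' measurableSet_uIoc]
    filter_upwards [hb] with r hr hmem
    obtain ⟨h1, h2⟩ := hr hmem
    rw [hE2]
    calc _ ≤ ‖Φ (t + a) * Θ (r + a) * Q‖ * ‖A (r + b) - A (r + a)‖ *
            ‖Φ (r + b) * Θ (s + b) * Q‖ := norm_mul₃_le
      _ ≤ c * ‖A (r + b) - A (r + a)‖ * c := by gcongr
      _ = _ := by rw [norm_sub_rev]; ring
  have hcg : Continuous (fun r => c ^ 2 * ‖A (r + a) - A (r + b)‖) := by fun_prop
  refine (intervalIntegral.norm_integral_le_abs_of_norm_le hbd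
    (hcg.intervalIntegrable s t)).trans (le_of_eq ?_)
  rw [intervalIntegral.integral_const_mul, abs_mul, abs_of_nonneg (by positivity : 0 ≤ c ^ 2)]

theorem Dich.diff (D : Dich A Φ Θ P c α) (t s a b : ℝ) :
    ‖gG Φ Θ P (t + a) (s + a) - gG Φ Θ P (t + b) (s + b)‖ ≤
      c ^ 2 * |∫ r in s..t, ‖A (r + a) - A (r + b)‖| := by
  by_cases hst : s ≤ t
  · have e1 : ∀ x y : ℝ, y ≤ x → gG Φ Θ P x y = Φ x * Θ y * P := fun x y h => by simp [gG, h]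
    rw [e1 _ _ (by linarith), e1 _ _ (by linarith)]
    refine D.diff_core D.hP D.commΦ D.commΘ t s a b (Eventually.of_forall fun r hr => ?_)
    rw [Set.uIoc_of_le hst] at hr
    rw [← e1 _ _ (by linarith [hr.2]), ← e1 _ _ (by linarith [hr.1])]
    exact ⟨D.norm_le_c _ _, D.norm_le_c _ _⟩
  · have hts : t < s := not_le.1 hst
    have e1 : ∀ x y : ℝ, x < y → gG Φ Θ P x y = -(Φ x * Θ y * (1 - P)) :=
      fun x y h => by simp [gG, h]
    have e2 : ∀ x y : ℝ, x < y → ‖Φ x * Θ y * (1 - P)‖ ≤ c := fun x y h => by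
      have := D.norm_le_c x y
      rwa [e1 _ _ h, norm_neg] at this
    rw [e1 _ _ (by linarith), e1 _ _ (by linarith), neg_sub_neg, norm_sub_rev]
    refine D.diff_core ?_ (fun t => ?_) (fun t => ?_) t s a b ?_
    · have := D.hP
      simp [mul_sub, sub_mul, this]
    · simp [mul_sub, sub_mul, D.commΦ]
    · simp [mul_sub, sub_mul, D.commΘ]
    · filter_upwards [volume.ae_ne s] with r hrs hr
      rw [Set.uIoc_of_ge hts.le] at hr
      have : r < s := lt_of_le_of_ne hr.2 hrs
      exact ⟨e2 _ _ (by linarith [hr.1]), e2 _ _ (by linarith)⟩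

theorem tendsto_interval_norm {F : ℕ → ℝ → R} {F₀ E : ℝ → R} {C : ℝ}
    (hF : ∀ n, StronglyMeasurable (F n)) (hE : StronglyMeasurable E)
    (hFC : ∀ n r, ‖F n r‖ ≤ C) (hEC : ∀ r, ‖E r‖ ≤ C)
    (hlim : ∀ r, Tendsto (fun n => F n r) atTop (𝓝 (F₀ r))) (s t : ℝ) :
    Tendsto (fun n => |∫ r in s..t, ‖F n r - E r‖|) atTop (𝓝 |∫ r in s..t, ‖F₀ r - E r‖|) := by
  refine Tendsto.abs ?_
  refine intervalIntegral.tendsto_integral_filter_of_dominated_convergence (fun _ => C + C)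
    (Eventually.of_forall fun n => ((hF n).sub hE).norm.aestronglyMeasurable)
    (Eventually.of_forall fun n => Eventually.of_forall fun r _ => ?_)
    intervalIntegrable_const (Eventually.of_forall fun r _ => ((hlim r).sub_const _).norm)
  rw [norm_norm]
  exact (norm_sub_le _ _).trans (add_le_add (hFC n r) (hEC r))

theorem Dich.exists_limit (D : Dich A Φ Θ P c α) {τ : ℕ → ℝ} {At : ℝ → R}
    (h : AAlong τ A At) : ∃ Gt : ℝ → ℝ → R,
      (∀ t s, Tendsto (fun n => gG Φ Θ P (t + τ n) (s + τ n)) atTop (𝓝 (Gt t s))) ∧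
      (∀ t s, Tendsto (fun n => Gt (t - τ n) (s - τ n)) atTop (𝓝 (gG Φ Θ P t s))) := by
  obtain ⟨C, hC⟩ := D.hAb
  have hA := D.hA
  have hc := D.hc
  have hAm : ∀ x, StronglyMeasurable (fun r => A (r + x)) := fun x =>
    Continuous.stronglyMeasurable (by fun_prop)
  have hAtm : StronglyMeasurable At :=
    stronglyMeasurable_of_tendsto (f := fun n r => A (r + τ n)) atTop (fun n => hAm _)
      (tendsto_pi_nhds.2 h.1)
  have hAtC : ∀ r, ‖At r‖ ≤ C := fun r =>
    le_of_tendsto (h.1 r).norm (Eventually.of_forall fun n => hC _)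
  have hcau : ∀ t s, CauchySeq (fun n => gG Φ Θ P (t + τ n) (s + τ n)) := by
    intro t s
    have h0 := tendsto_interval_norm (F := fun n r => A (r + τ n)) (F₀ := At) (E := At)
      (fun n => hAm _) hAtm (fun n r => hC _) hAtC h.1 s t
    simp only [sub_self, norm_zero, intervalIntegral.integral_zero, abs_zero] at h0
    have h1 := h0.const_mul (c ^ 2)
    rw [mul_zero] at h1
    have hint : ∀ n, IntervalIntegrable (fun r => ‖A (r + τ n) - At r‖) volume s t := by
      intro n
      refine (intervalIntegrable_const (c := C + C)).mono_fun
        ((hAm _).sub hAtm).norm.aestronglyMeasurable (Eventually.of_forall fun r => ?_)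
      simp only [norm_norm]
      exact ((norm_sub_le _ _).trans (add_le_add (hC _) (hAtC r))).trans (le_abs_self _)
    rw [Metric.cauchySeq_iff]
    intro ε hε
    obtain ⟨N, hN⟩ := Metric.tendsto_atTop.1 h1 (ε / 2) (by positivity)
    refine ⟨N, fun n hn m hm => ?_⟩
    have hn' := hN n hn
    have hm' := hN m hm
    rw [Real.dist_0_eq_abs, abs_of_nonneg (by positivity)] at hn' hm'
    rw [dist_eq_norm]
    refine (D.diff t s (τ n) (τ m)).trans_lt ?_
    have key : |∫ r in s..t, ‖A (r + τ n) - A (r + τ m)‖| ≤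
        |∫ r in s..t, ‖A (r + τ n) - At r‖| + |∫ r in s..t, ‖A (r + τ m) - At r‖| := by
      refine le_trans ?_ (abs_add_le _ _)
      rw [← intervalIntegral.integral_add (hint n) (hint m)]
      rw [intervalIntegral.abs_intervalIntegral_eq, intervalIntegral.abs_intervalIntegral_eq]
      rw [abs_of_nonneg (integral_nonneg fun r => norm_nonneg _)]
      refine le_trans ?_ (le_abs_self _)
      refine integral_mono_of_nonneg (Eventually.of_forall fun r => norm_nonneg _)
        (((hint n).add (hint m)).def') (Eventually.of_forall fun r => ?_)
      have := norm_sub_le (A (r + τ n) - At r) (A (r + τ m) - At r)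
      simpa using this
    have := mul_le_mul_of_nonneg_left key (by positivity : 0 ≤ c ^ 2)
    linarith
  choose Gt hGt using fun t s => cauchySeq_tendsto_of_complete (hcau t s)
  refine ⟨Gt, hGt, fun t s => ?_⟩
  have hb : ∀ n, ‖Gt (t - τ n) (s - τ n) - gG Φ Θ P t s‖ ≤
      c ^ 2 * |∫ r in s..t, ‖At (r - τ n) - A r‖| := by
    intro n
    have h0 := tendsto_interval_norm (F := fun m r => A (r - τ n + τ m)) (F₀ := fun r => At (r - τ n))
      (E := A) (fun m => Continuous.stronglyMeasurable (by fun_prop)) hA.stronglyMeasurable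
      (fun n r => hC _) hC (fun r => h.1 _) s t
    refine le_of_tendsto_of_tendsto ((hGt (t - τ n) (s - τ n)).sub_const _).norm
      (h0.const_mul (c ^ 2)) (Eventually.of_forall fun m => ?_)
    have := D.diff t s (-τ n + τ m) 0
    simp only [add_zero, ← add_assoc, ← sub_eq_add_neg] at this
    exact this
  have h0 := tendsto_interval_norm (F := fun n r => At (r - τ n)) (F₀ := A) (E := A)
      (fun n => hAtm.comp_measurable (measurable_id.sub_const _)) hA.stronglyMeasurable
      (fun n r => hAtC _) hC h.2 s t
  simp only [sub_self, norm_zero, intervalIntegral.integral_zero, abs_zero] at h0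
  have h1 := h0.const_mul (c ^ 2)
  rw [mul_zero] at h1
  rw [tendsto_iff_norm_sub_tendsto_zero]
  exact squeeze_zero (fun n => norm_nonneg _) hb h1

end AbstractGreen

section AbstractOperator

set_option linter.unusedSectionVars false

theorem exp_abs_integral {α : ℝ} (hα : 0 < α) (t : ℝ) :
    Integrable (fun s : ℝ => Real.exp (-α * |t - s|)) ∧
      ∫ s : ℝ, Real.exp (-α * |t - s|) = 2 / α := by
  have h1 : IntegrableOn (fun s : ℝ => Real.exp (-α * |s|)) (Set.Ioi 0) := by
    refine (integrableOn_exp_mul_Ioi (neg_lt_zero.2 hα) 0).congr_fun ?_ measurableSet_Ioi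
    intro x hx
    simp [abs_of_pos (Set.mem_Ioi.1 hx)]
  have h2 : IntegrableOn (fun s : ℝ => Real.exp (-α * |s|)) (Set.Iic 0) := by
    refine (integrableOn_exp_mul_Iic hα 0).congr_fun ?_ measurableSet_Iic
    intro x hx
    simp [abs_of_nonpos (Set.mem_Iic.1 hx)]
  have h3 : Integrable (fun s : ℝ => Real.exp (-α * |s|)) := by
    have := h2.union h1
    rwa [Set.Iic_union_Ioi, integrableOn_univ] at this
  refine ⟨h3.comp_sub_left t, ?_⟩
  rw [integral_sub_left_eq_self (fun s : ℝ => Real.exp (-α * |s|)) volume t]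
  rw [integral_comp_abs (f := fun x => Real.exp (-α * x)), integral_exp_mul_Ioi (neg_lt_zero.2 hα)]
  simp
  field_simp

/-- A unital contractive action of a normed ring. -/
structure RAct {R W : Type*} [NormedRing R] [NormedAlgebra ℝ R] [NormedAddCommGroup W]
    [NormedSpace ℝ W] (B : R →L[ℝ] W →L[ℝ] W) : Prop where
  one : ∀ w, B 1 w = w
  mul : ∀ a b w, B (a * b) w = B a (B b w)
  le : ∀ a w, ‖B a w‖ ≤ ‖a‖ * ‖w‖

/-- The Green operator. -/
noncomputable def gT {R W : Type*} [NormedRing R] [NormedAlgebra ℝ R] [NormedAddCommGroup W]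
    [NormedSpace ℝ W] (B : R →L[ℝ] W →L[ℝ] W) (Φ Θ : ℝ → R) (P : R) (h : ℝ → W) (t : ℝ) : W :=
  ∫ s : ℝ, B (gG Φ Θ P t s) (h s)

variable {R : Type*} [NormedRing R] [NormedAlgebra ℝ R] [CompleteSpace R]
  {A Φ Θ : ℝ → R} {P : R} {c α : ℝ}
  {W : Type*} [NormedAddCommGroup W] [NormedSpace ℝ W] [CompleteSpace W]
  {B : R →L[ℝ] W →L[ℝ] W}

theorem stronglyMeasurable_apply {X : Type*} [MeasurableSpace X] {a : X → R} {h : X → W}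
    (ha : StronglyMeasurable a)
    (hh : StronglyMeasurable h) : StronglyMeasurable (fun s => B (a s) (h s)) := by
  have hB : Continuous (fun q : R × W => B q.1 q.2) := by fun_prop
  exact hB.comp_stronglyMeasurable (ha.prodMk hh)

theorem Dich.gG_meas (D : Dich A Φ Θ P c α) (t : ℝ) :
    StronglyMeasurable (fun s => gG Φ Θ P t s) := by
  have hΘ := D.cΘ
  unfold gG
  refine StronglyMeasurable.ite measurableSet_Iic ?_ ?_
  · exact Continuous.stronglyMeasurable (by fun_prop)
  · exact Continuous.stronglyMeasurable (by fun_prop)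

theorem Dich.pt_le (D : Dich A Φ Θ P c α) (hB : RAct B) {h : ℝ → W} {M : ℝ}
    (hM : ∀ s, ‖h s‖ ≤ M) (t s : ℝ) :
    ‖B (gG Φ Θ P t s) (h s)‖ ≤ c * M * Real.exp (-α * |t - s|) := by
  refine (hB.le _ _).trans ?_
  have h1 := D.norm_le t s
  have h2 := hM s
  calc _ ≤ (c * Real.exp (-α * |t - s|)) * M :=
        mul_le_mul h1 h2 (norm_nonneg _) ((norm_nonneg _).trans h1)
    _ = _ := by ring

theorem Dich.integrable (D : Dich A Φ Θ P c α) (hB : RAct B) {h : ℝ → W} {M : ℝ}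
    (hh : StronglyMeasurable h) (hM : ∀ s, ‖h s‖ ≤ M) (t : ℝ) :
    Integrable (fun s => B (gG Φ Θ P t s) (h s)) :=
  ((exp_abs_integral D.hα t).1.const_mul (c * M)).mono'
    (stronglyMeasurable_apply (D.gG_meas t) hh).aestronglyMeasurable
    (Eventually.of_forall fun s => D.pt_le hB hM t s)

theorem Dich.gT_le (D : Dich A Φ Θ P c α) (hB : RAct B) {h : ℝ → W} {M : ℝ}
    (hM : ∀ s, ‖h s‖ ≤ M) (t : ℝ) : ‖gT B Φ Θ P h t‖ ≤ 2 * c / α * M := by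
  have h1 := exp_abs_integral D.hα t
  refine (norm_integral_le_of_norm_le (h1.1.const_mul (c * M))
    (Eventually.of_forall fun s => D.pt_le hB hM t s)).trans (le_of_eq ?_)
  rw [integral_const_mul, h1.2]
  ring

theorem Dich.gT_sub (D : Dich A Φ Θ P c α) (hB : RAct B) {h k : ℝ → W} {M N : ℝ}
    (hh : StronglyMeasurable h) (hM : ∀ s, ‖h s‖ ≤ M)
    (hk : StronglyMeasurable k) (hN : ∀ s, ‖k s‖ ≤ N) (t : ℝ) :
    gT B Φ Θ P h t - gT B Φ Θ P k t = gT B Φ Θ P (fun s => h s - k s) t := by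
  unfold gT
  rw [← integral_sub (D.integrable hB hh hM t) (D.integrable hB hk hN t)]
  simp

theorem Dich.gT_deriv (D : Dich A Φ Θ P c α) (hB : RAct B) {h : ℝ → W} {M : ℝ}
    (hh : Continuous h) (hM : ∀ s, ‖h s‖ ≤ M) (t : ℝ) :
    HasDerivAt (gT B Φ Θ P h) (B (A t) (gT B Φ Θ P h t) + h t) t := by
  have hΘ := D.cΘ
  have hi := fun t => D.integrable hB hh.stronglyMeasurable hM t
  have hk : Continuous (fun s => B (Θ s) (h s)) := by fun_prop
  have key : ∀ t, B (Θ t) (gT B Φ Θ P h t) - B (Θ 0) (gT B Φ Θ P h 0) =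
      ∫ s in (0:ℝ)..t, B (Θ s) (h s) := by
    intro t
    unfold gT
    rw [← ContinuousLinearMap.integral_comp_comm _ (hi t),
      ← ContinuousLinearMap.integral_comp_comm _ (hi 0),
      ← integral_sub ((B (Θ t)).integrable_comp (hi t)) ((B (Θ 0)).integrable_comp (hi 0))]
    rw [intervalIntegral, ← integral_indicator measurableSet_Ioc,
      ← integral_indicator measurableSet_Ioc, ← integral_sub]
    · congr 1
      ext1 s
      have e : ∀ x, B (Θ x) (B (gG Φ Θ P x s) (h s)) =
          if s ≤ x then B (Θ s * P) (h s) else B (Θ s * P) (h s) - B (Θ s) (h s) := by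
        intro x
        rw [← hB.mul]
        unfold gG
        split_ifs
        · rw [← mul_assoc, ← mul_assoc, D.ΘΦ, one_mul]
        · rw [mul_neg, ← mul_assoc, ← mul_assoc, D.ΘΦ, one_mul, mul_sub, mul_one, neg_sub,
            map_sub, sub_apply]
      rw [e, e]
      simp only [Set.indicator, Set.mem_Ioc]
      by_cases h1 : s ≤ t <;> by_cases h2 : s ≤ 0 <;> simp [h1, h2, not_lt.2, not_le.1]
    · exact (integrable_indicator_iff measurableSet_Ioc).2
        ((hk.intervalIntegrable 0 t).1)
    · exact (integrable_indicator_iff measurableSet_Ioc).2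
        ((hk.intervalIntegrable 0 t).2)
  have key2 : gT B Φ Θ P h = fun t => B (Φ t) (B (Θ 0) (gT B Φ Θ P h 0) +
      ∫ s in (0:ℝ)..t, B (Θ s) (h s)) := by
    ext1 t
    rw [← key t, add_sub_cancel, ← hB.mul, D.ΦΘ, hB.one]
  have hd : HasDerivAt (fun t => ∫ s in (0:ℝ)..t, B (Θ s) (h s)) (B (Θ t) (h t)) t :=
    intervalIntegral.integral_hasDerivAt_right (hk.intervalIntegrable 0 t)
      (hk.stronglyMeasurableAtFilter _ _) hk.continuousAt
  have hd2 : HasDerivAt (fun t => B (Φ t)) (B (A t * Φ t)) t :=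
    B.hasFDerivAt.comp_hasDerivAt t (D.dΦ t)
  have hd3 := hd2.clm_apply (hd.const_add (B (Θ 0) (gT B Φ Θ P h 0)))
  rw [← key2, ← hB.mul (Φ t), D.ΦΘ, hB.one, hB.mul, ← congrFun key2 t] at hd3
  exact hd3

theorem Dich.gT_aa (D : Dich A Φ Θ P c α) (hB : RAct B) (hA : AlmostAutomorphic A)
    {h : ℝ → W} (hh : AlmostAutomorphic h) : AlmostAutomorphic (gT B Φ Θ P h) := by
  obtain ⟨M, hM0, hM⟩ := hh.bounded
  refine ⟨continuous_iff_continuousAt.2 fun t => (D.gT_deriv hB hh.1 hM t).continuousAt,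
    fun σ => ?_⟩
  obtain ⟨k, hk, ⟨At, hAt⟩, ht, hht⟩ := hA.pair hh σ
  obtain ⟨Gt, hG1, hG2⟩ := D.exists_limit hAt
  set τ : ℕ → ℝ := fun n => σ (k n) with hτ
  have hhc := hh.1
  have hhtM : ∀ s, ‖ht s‖ ≤ M := fun s =>
    le_of_tendsto (hht.1 s).norm (Eventually.of_forall fun n => hM _)
  have hhtm : StronglyMeasurable ht :=
    stronglyMeasurable_of_tendsto (f := fun n r => h (r + τ n)) atTop
      (fun n => Continuous.stronglyMeasurable (by fun_prop)) (tendsto_pi_nhds.2 hht.1)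
  have hGm1 : ∀ t x, StronglyMeasurable (fun s => gG Φ Θ P t (s + x)) := fun t x =>
    (D.gG_meas t).comp_measurable (measurable_id.add_const _)
  have hGtm : ∀ t, StronglyMeasurable (Gt t) := fun t =>
    stronglyMeasurable_of_tendsto (f := fun n s => gG Φ Θ P (t + τ n) (s + τ n)) atTop
      (fun n => hGm1 _ _) (tendsto_pi_nhds.2 (hG1 t))
  have hGb : ∀ t s x, ‖gG Φ Θ P (t + x) (s + x)‖ ≤ c * Real.exp (-α * |t - s|) := by
    intro t s x
    have := D.norm_le (t + x) (s + x)
    rwa [add_sub_add_right_eq_sub] at this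
  have hGtb : ∀ t s, ‖Gt t s‖ ≤ c * Real.exp (-α * |t - s|) := fun t s =>
    le_of_tendsto (hG1 t s).norm (Eventually.of_forall fun n => hGb _ _ _)
  have hbd : ∀ (a : R) (w : W) (t s : ℝ), ‖a‖ ≤ c * Real.exp (-α * |t - s|) → ‖w‖ ≤ M →
      ‖B a w‖ ≤ c * M * Real.exp (-α * |t - s|) := by
    intro a w t s h1 h2
    refine (hB.le _ _).trans ?_
    calc _ ≤ (c * Real.exp (-α * |t - s|)) * M :=
          mul_le_mul h1 h2 (norm_nonneg _) ((norm_nonneg _).trans h1)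
      _ = _ := by ring
  have hBc : Continuous (fun q : R × W => B q.1 q.2) := by fun_prop
  refine ⟨k, hk, fun t => ∫ s, B (Gt t s) (ht s), fun t => ?_, fun t => ?_⟩
  · have e : ∀ n, gT B Φ Θ P h (t + τ n) =
        ∫ s, B (gG Φ Θ P (t + τ n) (s + τ n)) (h (s + τ n)) := by
      intro n
      unfold gT
      rw [integral_add_right_eq_self (fun s => B (gG Φ Θ P (t + τ n) s) (h s))]
    change Tendsto (fun n => gT B Φ Θ P h (t + τ n)) atTop _
    simp only [e]
    refine tendsto_integral_filter_of_dominated_convergence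
      (fun s => c * M * Real.exp (-α * |t - s|))
      (Eventually.of_forall fun n => (stronglyMeasurable_apply (hGm1 _ _)
        (Continuous.stronglyMeasurable (by fun_prop))).aestronglyMeasurable)
      (Eventually.of_forall fun n => Eventually.of_forall fun s => hbd _ _ _ _ (hGb _ _ _) (hM _))
      ((exp_abs_integral D.hα t).1.const_mul _) (Eventually.of_forall fun s => ?_)
    exact (hBc.tendsto (Gt t s, ht s)).comp ((hG1 t s).prodMk_nhds (hht.1 s))
  · have e : ∀ n, ∫ s, B (Gt (t - τ n) s) (ht s) =
        ∫ s, B (Gt (t - τ n) (s - τ n)) (ht (s - τ n)) := by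
      intro n
      rw [integral_sub_right_eq_self (fun s => B (Gt (t - τ n) s) (ht s))]
    change Tendsto (fun n => ∫ s, B (Gt (t - τ n) s) (ht s)) atTop _
    simp only [e]
    refine tendsto_integral_filter_of_dominated_convergence
      (fun s => c * M * Real.exp (-α * |t - s|))
      (Eventually.of_forall fun n => (stronglyMeasurable_apply
        ((hGtm _).comp_measurable (measurable_id.sub_const _))
        (hhtm.comp_measurable (measurable_id.sub_const _))).aestronglyMeasurable)
      (Eventually.of_forall fun n => Eventually.of_forall fun s =>
        hbd _ _ _ _ ?_ (hhtM _))
      ((exp_abs_integral D.hα t).1.const_mul _) (Eventually.of_forall fun s => ?_)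
    · have := hGtb (t - τ n) (s - τ n)
      rwa [sub_sub_sub_cancel_right] at this
    · exact (hBc.tendsto (gG Φ Θ P t s, h s)).comp ((hG2 t s).prodMk_nhds (hht.2 s))

theorem Dich.bounded_homog (D : Dich A Φ Θ P c α) (hB : RAct B) {z : ℝ → W} {M : ℝ}
    (hz : ∀ t, HasDerivAt z (B (A t) (z t)) t) (hM : ∀ t, ‖z t‖ ≤ M) (t : ℝ) : z t = 0 := by
  have hder : ∀ t, HasDerivAt (fun t => B (Θ t) (z t)) 0 t := by
    intro t
    have hd2 : HasDerivAt (fun t => B (Θ t)) (B (-(Θ t * A t))) t :=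
      B.hasFDerivAt.comp_hasDerivAt t (D.dΘ t)
    have hd3 := hd2.clm_apply (hz t)
    rwa [map_neg, neg_apply, hB.mul, neg_add_cancel] at hd3
  have hconst : ∀ t s, B (Θ t) (z t) = B (Θ s) (z s) := fun t s =>
    is_const_of_deriv_eq_zero (fun x => (hder x).differentiableAt) (fun x => (hder x).deriv) t s
  have hrep : ∀ s, z t = B (Φ t * Θ s) (z s) := by
    intro s
    rw [hB.mul, ← hconst t s, ← hB.mul, D.ΦΘ, hB.one]
  have hexp : ∀ u : ℝ → ℝ, Tendsto (fun s => |t - u s|) atTop atTop →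
      Tendsto (fun s => c * M * Real.exp (-α * |t - u s|)) atTop (𝓝 0) := by
    intro u hu
    have h1 : Tendsto (fun s => α * |t - u s|) atTop atTop := hu.const_mul_atTop D.hα
    have h2 := (Real.tendsto_exp_neg_atTop_nhds_zero.comp h1).const_mul (c * M)
    simpa [Function.comp_def] using h2
  have hPz : B P (z t) = 0 := by
    have hb : ∀ s ≤ t, ‖B P (z t)‖ ≤ c * M * Real.exp (-α * |t - s|) := by
      intro s hs
      have h1 := D.pt_le hB hM t s
      have : B P (z t) = B (gG Φ Θ P t s) (z s) := by
        rw [hrep s, ← hB.mul]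
        simp only [gG, hs, if_true]
        rw [mul_assoc (Φ t), D.commΘ, ← mul_assoc, ← mul_assoc, D.commΦ]
      rwa [this]
    rw [← norm_le_zero_iff]
    refine ge_of_tendsto (hexp (fun s => -s) ?_) ?_
    · refine tendsto_abs_atTop_atTop.comp ?_
      simp only [sub_neg_eq_add]
      exact tendsto_atTop_add_const_left _ _ tendsto_id
    · filter_upwards [eventually_ge_atTop (-t)] with s hs
      exact hb _ (by linarith)
  have hQz : B (1 - P) (z t) = 0 := by
    have hb : ∀ s, t < s → ‖B (1 - P) (z t)‖ ≤ c * M * Real.exp (-α * |t - s|) := by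
      intro s hs
      have h1 := D.pt_le hB hM t s
      have : B (1 - P) (z t) = - B (gG Φ Θ P t s) (z s) := by
        rw [hrep s, ← hB.mul]
        simp only [gG, not_le.2 hs, if_false]
        rw [map_neg, neg_apply, neg_neg, mul_sub, sub_mul, mul_one, one_mul,
          mul_assoc (Φ t), D.commΘ, ← mul_assoc, ← mul_assoc, D.commΦ]
      rwa [this, norm_neg]
    rw [← norm_le_zero_iff]
    refine ge_of_tendsto (hexp (fun s => s) ?_) ?_
    · have h1 : Tendsto (fun s : ℝ => t - s) atTop atBot := by
        simpa only [sub_eq_add_neg] using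
          tendsto_atBot_add_const_left _ t (tendsto_neg_atTop_atBot (G := ℝ))
      exact tendsto_abs_atBot_atTop.comp h1
    · filter_upwards [eventually_gt_atTop t] with s hs
      exact hb _ hs
  rw [map_sub, sub_apply, hPz, hB.one, sub_zero] at hQz
  exact hQz

end AbstractOperator

section AbstractMain

theorem Dich.main {R : Type*} [NormedRing R] [NormedAlgebra ℝ R] [CompleteSpace R]
    {A Φ Θ : ℝ → R} {P : R} {c α : ℝ}
    {W : Type*} [NormedAddCommGroup W] [NormedSpace ℝ W] [CompleteSpace W]
    {B : R →L[ℝ] W →L[ℝ] W}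
    (D : Dich A Φ Θ P c α) (hB : RAct B) (hA : AlmostAutomorphic A)
    {ρ : ℝ} (hρ : 0 < ρ) {f : ℝ → W} (hf : AlmostAutomorphic f)
    (hfb : ∀ t : ℝ, ‖f t‖ ≤ α * ρ / (2 * c))
    {g : ℝ → W → W} (hgc : Continuous fun q : ℝ × W => g q.1 q.2)
    (hg0 : ∀ t : ℝ, g t 0 = 0) (hgaa : AlmostAutomorphicUniform g)
    {L : ℝ} (hL : 0 < L)
    (hglip : ∀ (t : ℝ) (y₁ y₂ : W), ‖y₁ - gT B Φ Θ P f t‖ ≤ ρ → ‖y₂ - gT B Φ Θ P f t‖ ≤ ρ →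
      ‖g t y₁ - g t y₂‖ ≤ L * ‖y₁ - y₂‖)
    (hLα : 4 * c * L < α) :
    ∃! y : ℝ → W, AlmostAutomorphic y ∧ (∀ t : ℝ, ‖y t - gT B Φ Θ P f t‖ ≤ ρ) ∧
      ∀ t, HasDerivAt y (B (A t) (y t) + f t + g t (y t)) t := by
  have hc := D.hc
  have hα := D.hα
  set φ := gT B Φ Θ P f with hφ
  have hφb : ∀ t, ‖φ t‖ ≤ ρ := fun t => by
    refine (D.gT_le hB hfb t).trans (le_of_eq ?_)
    field_simp
  have h0φ : ∀ t, ‖(0 : W) - φ t‖ ≤ ρ := fun t => by simpa using hφb t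
  -- the nonlinear part
  have hgb : ∀ t (w : W), ‖w - φ t‖ ≤ ρ → ‖g t w‖ ≤ L * (2 * ρ) := by
    intro t w hw
    have h1 := hglip t w 0 hw (h0φ t)
    rw [hg0, sub_zero, sub_zero] at h1
    refine h1.trans ?_
    have h2 : ‖w‖ ≤ ‖w - φ t‖ + ‖φ t‖ := by
      simpa using norm_add_le (w - φ t) (φ t)
    have := hφb t
    gcongr
    linarith
  have hNaa : ∀ y : ℝ → W, AlmostAutomorphic y →
      AlmostAutomorphic (fun t => f t + g t (y t)) := fun y hy =>
    hf.add (AlmostAutomorphic.compose hgc hgaa hy)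
  have hNb : ∀ y : ℝ → W, (∀ t, ‖y t - φ t‖ ≤ ρ) →
      ∀ t, ‖f t + g t (y t)‖ ≤ α * ρ / (2 * c) + L * (2 * ρ) := fun y hy t =>
    (norm_add_le _ _).trans (add_le_add (hfb t) (hgb t _ (hy t)))
  let T : (ℝ → W) → ℝ → W := fun y => gT B Φ Θ P (fun s => f s + g s (y s))
  have hTaa : ∀ y, AlmostAutomorphic y → AlmostAutomorphic (T y) := fun y hy =>
    D.gT_aa hB hA (hNaa y hy)
  have hTb : ∀ y, AlmostAutomorphic y → (∀ t, ‖y t - φ t‖ ≤ ρ) → ∀ t, ‖T y t - φ t‖ ≤ ρ := by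
    intro y hy hyb t
    have e : T y t - φ t = gT B Φ Θ P (fun s => (f s + g s (y s)) - f s) t :=
      D.gT_sub hB (hNaa y hy).1.stronglyMeasurable (hNb y hyb) hf.1.stronglyMeasurable hfb t
    rw [e]
    have h1 : ‖gT B Φ Θ P (fun s => (f s + g s (y s)) - f s) t‖ ≤ 2 * c / α * (L * (2 * ρ)) := by
      refine D.gT_le hB (fun s => ?_) t
      rw [add_sub_cancel_left]
      exact hgb s _ (hyb s)
    refine h1.trans ?_
    rw [div_mul_eq_mul_div, div_le_iff₀ hα]
    nlinarith
  have hTlip : ∀ y z, AlmostAutomorphic y → (∀ t, ‖y t - φ t‖ ≤ ρ) →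
      AlmostAutomorphic z → (∀ t, ‖z t - φ t‖ ≤ ρ) → ∀ δ, (∀ t, ‖y t - z t‖ ≤ δ) →
      ∀ t, ‖T y t - T z t‖ ≤ 2 * c * L / α * δ := by
    intro y z hy hyb hz hzb δ hδ t
    have e : T y t - T z t = gT B Φ Θ P (fun s => (f s + g s (y s)) - (f s + g s (z s))) t :=
      D.gT_sub hB (hNaa y hy).1.stronglyMeasurable (hNb y hyb)
        (hNaa z hz).1.stronglyMeasurable (hNb z hzb) t
    rw [e]
    refine (D.gT_le hB (M := L * δ) (fun s => ?_) t).trans (le_of_eq (by ring))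
    rw [add_sub_add_left_eq_sub]
    exact (hglip s _ _ (hyb s) (hzb s)).trans (by gcongr; exact hδ s)
  have hTder : ∀ y, AlmostAutomorphic y → (∀ t, ‖y t - φ t‖ ≤ ρ) → ∀ t,
      HasDerivAt (T y) (B (A t) (T y t) + f t + g t (y t)) t := by
    intro y hy hyb t
    have := D.gT_deriv hB (hNaa y hy).1 (hNb y hyb) t
    rwa [← add_assoc] at this
  -- solutions are fixed points
  have hsol : ∀ y, AlmostAutomorphic y → (∀ t, ‖y t - φ t‖ ≤ ρ) →
      (∀ t, HasDerivAt y (B (A t) (y t) + f t + g t (y t)) t) → T y = y := by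
    intro y hy hyb hyd
    obtain ⟨M1, -, hM1⟩ := hy.bounded
    obtain ⟨M2, -, hM2⟩ := (hTaa y hy).bounded
    have hz : ∀ t, T y t - y t = 0 := by
      refine D.bounded_homog hB (z := fun t => T y t - y t) (M := M2 + M1) (fun t => ?_)
        (fun t => (norm_sub_le _ _).trans (add_le_add (hM2 t) (hM1 t)))
      refine ((hTder y hy hyb t).sub (hyd t)).congr_deriv ?_
      rw [map_sub]
      abel
    ext1 t
    exact sub_eq_zero.1 (hz t)
  -- the complete metric space
  let S : Set (BoundedContinuousFunction ℝ W) :=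
    {y | AlmostAutomorphic (y : ℝ → W) ∧ ∀ t, ‖y t - φ t‖ ≤ ρ}
  have hSc : IsClosed S := by
    refine IsSeqClosed.isClosed fun x y hx hxy => ⟨?_, fun t => ?_⟩
    · refine almostAutomorphic_of_uniform y.continuous fun ε hε => ?_
      obtain ⟨N, hN⟩ := Metric.tendsto_atTop.1 hxy ε hε
      refine ⟨x N, (hx N).1, fun t => ?_⟩
      rw [← dist_eq_norm]
      exact (BoundedContinuousFunction.dist_coe_le_dist t).trans (hN N le_rfl).le
    · have h1 : Tendsto (fun n => x n t) atTop (𝓝 (y t)) :=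
        by
        rw [tendsto_iff_dist_tendsto_zero] at hxy ⊢
        exact squeeze_zero (fun _ => dist_nonneg)
          (fun n => BoundedContinuousFunction.dist_coe_le_dist t) hxy
      exact le_of_tendsto (h1.sub_const _).norm (Eventually.of_forall fun n => (hx n).2 t)
  have : CompleteSpace S := hSc.completeSpace_coe
  have hmk : ∀ y : ℝ → W, AlmostAutomorphic y → (∀ t, ‖y t - φ t‖ ≤ ρ) →
      ∃ x : S, ∀ t, (x : BoundedContinuousFunction ℝ W) t = y t := by
    intro y hy hyb
    obtain ⟨M, -, hM⟩ := hy.bounded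
    exact ⟨⟨BoundedContinuousFunction.ofNormedAddCommGroup y hy.1 M hM, hy, hyb⟩, fun t => rfl⟩
  have : Nonempty S := by
    obtain ⟨x, -⟩ := hmk (fun _ => 0)
      ⟨continuous_const, fun σ => ⟨id, strictMono_id, fun _ => 0, fun _ => tendsto_const_nhds,
        fun _ => tendsto_const_nhds⟩⟩ h0φ
    exact ⟨x⟩
  choose F hF using fun x : S => hmk (T x.1) (hTaa _ x.2.1) (hTb _ x.2.1 x.2.2)
  have hK0 : 0 ≤ 2 * c * L / α := by positivity
  have hFc : ContractingWith ⟨2 * c * L / α, hK0⟩ F := by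
    refine ⟨?_, LipschitzWith.of_dist_le_mul fun x z => ?_⟩
    · refine NNReal.coe_lt_coe.1 ?_
      change 2 * c * L / α < 1
      rw [div_lt_one hα]
      nlinarith [mul_pos hc hL]
    · rw [Subtype.dist_eq, BoundedContinuousFunction.dist_le (by positivity)]
      intro t
      rw [hF, hF, dist_eq_norm]
      refine hTlip _ _ x.2.1 x.2.2 z.2.1 z.2.2 _ (fun t => ?_) t
      rw [← dist_eq_norm, Subtype.dist_eq]
      exact BoundedContinuousFunction.dist_coe_le_dist t
  have hfix := hFc.fixedPoint_isFixedPt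
  set y := ContractingWith.fixedPoint F hFc with hy
  have hTy : T y.1 = y.1 := by
    ext1 t
    rw [← hF y t, hfix]
  refine ⟨y.1, ⟨y.2.1, y.2.2, fun t => ?_⟩, ?_⟩
  · have := hTder y.1 y.2.1 y.2.2 t
    rwa [hTy] at this
  · rintro z ⟨hz, hzb, hzd⟩
    obtain ⟨x, hx⟩ := hmk z hz hzb
    have hxz : (x.1 : ℝ → W) = z := funext hx
    have hTz := hsol z hz hzb hzd
    have hxf : Function.IsFixedPt F x := by
      refine Subtype.ext (BoundedContinuousFunction.ext fun t => ?_)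
      rw [hF, hxz, hTz]
    rw [← hxz, hFc.fixedPoint_unique hxf]

end AbstractMain

section Instantiate

/-- The matrix action as a real bilinear continuous map. -/
theorem exists_matAct {V : Type*} [NormedAddCommGroup V] [NormedSpace ℂ V] {p : ℕ} :
    ∃ B : Matrix (Fin p) (Fin p) ℂ →L[ℝ] (Fin p → V) →L[ℝ] (Fin p → V),
      RAct B ∧ ∀ M v, B M v = matSMulVec M v := by
  have hle : ∀ (M : Matrix (Fin p) (Fin p) ℂ) (v : Fin p → V),
      ‖matSMulVec M v‖ ≤ ‖M‖ * ‖v‖ := by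
    intro M v
    rw [pi_norm_le_iff_of_nonneg (by positivity)]
    intro i
    have h1 : ∑ j, ‖M i j‖ ≤ ‖M‖ := by
      rw [Matrix.linfty_opNorm_def]
      have := Finset.le_sup (f := fun i => ∑ j, ‖M i j‖₊) (Finset.mem_univ i)
      rw [← NNReal.coe_le_coe] at this
      simpa using this
    calc ‖matSMulVec M v i‖ ≤ ∑ j, ‖M i j • v j‖ := norm_sum_le _ _
      _ ≤ ∑ j, ‖M i j‖ * ‖v‖ := by
          refine Finset.sum_le_sum fun j _ => ?_
          rw [norm_smul]
          gcongr
          exact norm_le_pi_norm v j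
      _ = (∑ j, ‖M i j‖) * ‖v‖ := by rw [Finset.sum_mul]
      _ ≤ _ := by gcongr
  let b : Matrix (Fin p) (Fin p) ℂ →ₗ[ℝ] (Fin p → V) →ₗ[ℝ] (Fin p → V) :=
    LinearMap.mk₂ ℝ (fun M v => matSMulVec M v)
      (fun M N v => by ext i; simp [matSMulVec, add_smul, Finset.sum_add_distrib])
      (fun r M v => by ext i; simp [matSMulVec, Finset.smul_sum, mul_smul])
      (fun M v w => by ext i; simp [matSMulVec, Finset.sum_add_distrib])
      (fun r M v => by ext i; simp [matSMulVec, Finset.smul_sum, smul_comm r])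
  refine ⟨b.mkContinuous₂ 1 (fun M v => by simpa [b] using hle M v), ⟨fun w => ?_, fun M N w => ?_,
    fun M w => ?_⟩, fun M v => rfl⟩
  · ext i
    simp [b, matSMulVec, Matrix.one_apply]
  · ext i
    simp only [LinearMap.mkContinuous₂_apply, b, LinearMap.mk₂_apply, matSMulVec, Matrix.mul_apply,
      Finset.sum_smul, Finset.smul_sum, mul_smul]
    rw [Finset.sum_comm]
  · simpa [b] using hle M w

end Instantiate

theorem nonlinear_matrix_equation_unique_almost_automorphic_solution
    {V : Type*} [NormedAddCommGroup V] [NormedSpace ℂ V] [CompleteSpace V] {p : ℕ}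
    (A ΦA : ℝ → Matrix (Fin p) (Fin p) ℂ)
    (hAc : Continuous A) (hAb : ∃ C, ∀ t, ‖A t‖ ≤ C)
    (hAaa : ∀ i j : Fin p, AlmostAutomorphic (fun t => A t i j))
    (hΦA : IsFundamentalMatrix A ΦA)
    (P : Matrix (Fin p) (Fin p) ℂ) (hP : P * P = P)
    (hPcomm : ∀ t : ℝ, ΦA t * P = P * ΦA t)
    (c α : ℝ) (hc : 0 < c) (hα : 0 < α)
    (hdich : ∀ t s : ℝ, ‖GreenMat ΦA P t s‖ ≤ c * Real.exp (-α * |t - s|))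
    (ρ : ℝ) (hρ : 0 < ρ)
    (f : ℝ → (Fin p → V)) (hfc : Continuous f) (hfaa : AlmostAutomorphic f)
    (hfb : ∀ t : ℝ, ‖f t‖ ≤ α * ρ / (2 * c))
    (g : ℝ → (Fin p → V) → (Fin p → V))
    (hgc : Continuous fun q : ℝ × (Fin p → V) => g q.1 q.2)
    (hg0 : ∀ t : ℝ, g t 0 = 0)
    (hgaa : AlmostAutomorphicUniform g)
    (L : ℝ) (hL : 0 < L)
    (hglip : ∀ (t : ℝ) (y₁ y₂ : Fin p → V),
      ‖y₁ - greenSol ΦA P f t‖ ≤ ρ → ‖y₂ - greenSol ΦA P f t‖ ≤ ρ →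
      ‖g t y₁ - g t y₂‖ ≤ L * ‖y₁ - y₂‖)
    (hLα : 4 * c * L < α) :
    ∃! y : ℝ → (Fin p → V),
      AlmostAutomorphic y ∧
      (∀ t : ℝ, ‖y t - greenSol ΦA P f t‖ ≤ ρ) ∧
      (∀ (t : ℝ) (i : Fin p),
        HasDerivAt (fun t => y t i)
          ((∑ j : Fin p, A t i j • y t j) + f t i + g t (y t) i) t) := by
  obtain ⟨B, hB, hBM⟩ := exists_matAct (V := V) (p := p)
  have hcomp : CompleteSpace (Matrix (Fin p) (Fin p) ℂ) := FiniteDimensional.complete ℂ _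
  have hdet : ∀ t, IsUnit (ΦA t).det := fun t => (Matrix.isUnit_iff_isUnit_det _).1 (hΦA.2 t)
  have hΦΘ : ∀ t, ΦA t * (ΦA t)⁻¹ = 1 := fun t => Matrix.mul_nonsing_inv _ (hdet t)
  have hΘΦ : ∀ t, (ΦA t)⁻¹ * ΦA t = 1 := fun t => Matrix.nonsing_inv_mul _ (hdet t)
  have D : Dich A ΦA (fun t => (ΦA t)⁻¹) P c α := by
    refine ⟨hAc, hAb, hΦA.1, fun t => ?_, hΦΘ, hΘΦ, hP, hPcomm, fun t => ?_, hc, hα, hdich⟩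
    · obtain ⟨u, hu⟩ := hΦA.2 t
      have h1 := hasFDerivAt_ringInverse (𝕜 := ℝ) u
      have hinv : (↑u⁻¹ : Matrix (Fin p) (Fin p) ℂ) = (ΦA t)⁻¹ := by
        rw [← hu, Matrix.coe_units_inv]
      rw [hinv, hu] at h1
      have h2 := h1.comp_hasDerivAt t (hΦA.1 t)
      have h3 : (fun t => (ΦA t)⁻¹) = Ring.inverse ∘ ΦA := by
        ext1 t
        exact Matrix.nonsing_inv_eq_ringInverse _
      rw [h3]
      refine h2.congr_deriv ?_
      change -((ΦA t)⁻¹ * (A t * ΦA t) * (ΦA t)⁻¹) = -((ΦA t)⁻¹ * A t)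
      rw [mul_assoc, mul_assoc (A t), hΦΘ, mul_one]
    · calc (ΦA t)⁻¹ * P = (ΦA t)⁻¹ * P * (ΦA t * (ΦA t)⁻¹) := by rw [hΦΘ, mul_one]
        _ = (ΦA t)⁻¹ * (P * ΦA t) * (ΦA t)⁻¹ := by simp only [mul_assoc]
        _ = ((ΦA t)⁻¹ * ΦA t) * P * (ΦA t)⁻¹ := by rw [← hPcomm]; simp only [mul_assoc]
        _ = P * (ΦA t)⁻¹ := by rw [hΘΦ, one_mul]
  have hA : AlmostAutomorphic A := by
    refine ⟨hAc, fun σ => ?_⟩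
    obtain ⟨k, hk, h⟩ := AlmostAutomorphic.family
      (ψ := fun (q : Fin p × Fin p) t => A t q.1 q.2) (fun q => hAaa q.1 q.2) σ
    choose ψt hψ using h
    refine ⟨k, hk, fun t => Matrix.of fun i j => ψt (i, j) t, fun t => ?_, fun t => ?_⟩
    · exact tendsto_pi_nhds.2 fun i => tendsto_pi_nhds.2 fun j => (hψ (i, j)).1 t
    · exact tendsto_pi_nhds.2 fun i => tendsto_pi_nhds.2 fun j => (hψ (i, j)).2 t
  have hsolEq : greenSol ΦA P f = gT B ΦA (fun t => (ΦA t)⁻¹) P f := by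
    ext1 t
    exact congrArg (fun F : ℝ → (Fin p → V) => ∫ s, F s)
      (funext fun s => (hBM (GreenMat ΦA P t s) (f s)).symm)
  rw [hsolEq] at hglip
  rw [hsolEq]
  have hmain := D.main hB hA hρ hfaa hfb hgc hg0 hgaa hL hglip hLα
  have hiff : ∀ (y : ℝ → (Fin p → V)) (t : ℝ),
      HasDerivAt y (matSMulVec (A t) (y t) + f t + g t (y t)) t ↔ ∀ i : Fin p,
        HasDerivAt (fun t => y t i)
          ((∑ j : Fin p, A t i j • y t j) + f t i + g t (y t) i) t := by
    intro y t
    rw [hasDerivAt_pi]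
    rfl
  have he : ∀ (y : ℝ → (Fin p → V)) (t : ℝ),
      B (A t) (y t) + f t + g t (y t) = matSMulVec (A t) (y t) + f t + g t (y t) := fun y t =>
    congrArg (fun w => w + f t + g t (y t)) (hBM _ _)
  obtain ⟨y, ⟨h1, h2, h3⟩, hu⟩ := hmain
  exact ⟨y, ⟨h1, h2, fun t => (hiff y t).1 ((h3 t).congr_deriv (he y t))⟩,
    fun z ⟨k1, k2, k3⟩ => hu z ⟨k1, k2, fun t =>
      ((hiff z t).2 (k3 t)).congr_deriv (he z t).symm⟩⟩
end
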